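/- Let K be a number field and S a finite set of places of K containing all the archimedean ones. Let φ be an endomorphism of ℙ¹ defined over K of degree d ≥ 2 with good reduction outside S. Suppose P ∈ ℙ¹(K) is a fixed point of φ and Q ∈ ℙ¹(K) is a periodic point of φ of period 2. Then |Tail(φ,K,P)| ≤ (C(3,|S|) + 3)(d−1), where C(3,s) = e^{18^9(3s−2)}. -/

import Mathlib

open NumberField IsDedekindDomain MvPolynomial
open scoped Classical nonZeroDivisors

set_option synthInstance.maxHeartbeats 1000000
set_option maxHeartbeats 1000000

noncomputable section

/-- The projective line over `K`. -/
abbrev P1 (K : Type*) [Field K] := Projectivization K (Fin 2 → K)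

variable {K : Type*} [Field K] [NumberField K]

/-- The additive `v`-adic valuation (order) of `x ∈ K`, with junk value `0` at `x = 0`,
normalized so that it is surjective onto `ℤ`. -/
def ordAt (v : HeightOneSpectrum (𝓞 K)) (x : K) : ℤ :=
  if hx : x = 0 then 0
  else - Multiplicative.toAdd (WithZero.unzero ((v.valuation K).ne_zero_iff.mpr hx))

/-- `min (v(x), v(y))` for a pair of coordinates, not both zero. -/
def minOrd (v : HeightOneSpectrum (𝓞 K)) (x y : K) : ℤ :=
  if x = 0 then ordAt v y else if y = 0 then ordAt v x else min (ordAt v x) (ordAt v y)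

/-- The `v`-adic logarithmic distance between two points of `ℙ¹(K)`:
`δ_v(P,Q) = v(x₁y₂ - x₂y₁) - min(v x₁, v y₁) - min(v x₂, v y₂)`, with value `⊤` when `P = Q`
(it is independent of the choice of homogeneous coordinates, so we compute it on the chosen
representatives). -/
def logDist (v : HeightOneSpectrum (𝓞 K)) (P Q : P1 K) : WithTop ℤ :=
  if P = Q then ⊤
  else ((ordAt v (P.rep 0 * Q.rep 1 - P.rep 1 * Q.rep 0)
        - minOrd v (P.rep 0) (P.rep 1) - minOrd v (Q.rep 0) (Q.rep 1) : ℤ) : WithTop ℤ)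

/-- An endomorphism of `ℙ¹` of degree `d` defined over `K`, given by a pair of homogeneous
forms of degree `d` with no common zero over the algebraic closure, together with the induced
self-map of `ℙ¹(K)`. -/
structure P1Map (K : Type*) [Field K] (d : ℕ) where
  toFun : P1 K → P1 K
  F : MvPolynomial (Fin 2) K
  G : MvPolynomial (Fin 2) K
  homF : F.IsHomogeneous d
  homG : G.IsHomogeneous d
  coprime : ∀ x y : AlgebraicClosure K,
    aeval ![x, y] F = 0 → aeval ![x, y] G = 0 → x = 0 ∧ y = 0
  compat : ∀ (x y : K) (hxy : ![x, y] ≠ 0)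
    (h : ![eval ![x, y] F, eval ![x, y] G] ≠ 0),
    toFun (Projectivization.mk K ![x, y] hxy) =
      Projectivization.mk K ![eval ![x, y] F, eval ![x, y] G] h

variable {d : ℕ}

/-- `φ` has good reduction at the finite place `v`: some representing pair of forms has
coefficients in the valuation ring at `v`, not all in the maximal ideal, and the reductions
of the two forms modulo `v` have no common zero in `ℙ¹` of the algebraic closure of the
residue field. -/
def GoodReductionAt (φ : P1Map K d) (v : HeightOneSpectrum (𝓞 K)) : Prop :=
  ∃ c : K, c ≠ 0 ∧
    ∃ F₀ G₀ : MvPolynomial (Fin 2) (v.valuation (K := K)).valuationSubring,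
      MvPolynomial.map ((v.valuation (K := K)).valuationSubring.subtype) F₀ = C c * φ.F ∧
      MvPolynomial.map ((v.valuation (K := K)).valuationSubring.subtype) G₀ = C c * φ.G ∧
      ((∃ m, F₀.coeff m ∉ IsLocalRing.maximalIdeal (v.valuation (K := K)).valuationSubring) ∨
        (∃ m, G₀.coeff m ∉ IsLocalRing.maximalIdeal (v.valuation (K := K)).valuationSubring)) ∧
      ∀ x y : AlgebraicClosure
          (IsLocalRing.ResidueField (v.valuation (K := K)).valuationSubring),
        eval ![x, y] (MvPolynomial.map
          ((algebraMap (IsLocalRing.ResidueField (v.valuation (K := K)).valuationSubring)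
              (AlgebraicClosure _)).comp
            (IsLocalRing.residue _)) F₀) = 0 →
        eval ![x, y] (MvPolynomial.map
          ((algebraMap (IsLocalRing.ResidueField (v.valuation (K := K)).valuationSubring)
              (AlgebraicClosure _)).comp
            (IsLocalRing.residue _)) G₀) = 0 →
        x = 0 ∧ y = 0

/-- `φ` has good reduction outside `S`, where `S` consists of all archimedean places together
with the finite places in `T`. -/
def GoodReductionOutside (φ : P1Map K d) (T : Finset (HeightOneSpectrum (𝓞 K))) : Prop :=
  ∀ v ∉ T, GoodReductionAt φ v

/-- `P` is a periodic point of `φ`. -/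
def IsPeriodicPoint (φ : P1Map K d) (P : P1 K) : Prop :=
  ∃ n, 0 < n ∧ φ.toFun^[n] P = P

/-- `P` is a preperiodic point of `φ`. -/
def IsPreperiodicPoint (φ : P1Map K d) (P : P1 K) : Prop :=
  ∃ m, IsPeriodicPoint φ (φ.toFun^[m] P)

/-- `P` is a tail point of `φ`: preperiodic but not periodic. -/
def IsTailPoint (φ : P1Map K d) (P : P1 K) : Prop :=
  IsPreperiodicPoint φ P ∧ ¬ IsPeriodicPoint φ P

/-- The set `Tail(φ,K,P)` of `K`-rational tail points of `P`: non-periodic points having `P`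
in their forward orbit. -/
def TailOf (φ : P1Map K d) (P : P1 K) : Set (P1 K) :=
  {Q | ¬ IsPeriodicPoint φ Q ∧ ∃ n, φ.toFun^[n] Q = P}

/-- `P = [a:b]` is a critical point of `φ = [F:G]`: the algebraic condition
`φ([x:y]) = φ([a:b])`, i.e. the form `G(a,b)·F(X,Y) - F(a,b)·G(X,Y)`, vanishes to order
at least `2` at `[a:b]`. -/
def IsCriticalPt (φ : P1Map K d) (P : P1 K) : Prop :=
  ∃ (a b : K) (hab : ![a, b] ≠ 0), P = Projectivization.mk K ![a, b] hab ∧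
    (C b * X 0 - C a * X 1) ^ 2 ∣
      (C (eval ![a, b] φ.G) * φ.F - C (eval ![a, b] φ.F) * φ.G)

/-- `P` belongs to a critical cycle of `φ`: it lies in the orbit of a critical periodic
point. -/
def InCriticalCycle (φ : P1Map K d) (P : P1 K) : Prop :=
  ∃ Q, IsCriticalPt φ Q ∧ IsPeriodicPoint φ Q ∧ ∃ n, φ.toFun^[n] Q = P

/-- The cardinality `|S|` of the set of places `S` consisting of all archimedean places
together with the finite places in `T`. -/
def sCard (K : Type*) [Field K] [NumberField K] (T : Finset (HeightOneSpectrum (𝓞 K))) : ℕ :=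
  T.card + Fintype.card (InfinitePlace K)

/-- `B(s) = 2^{16 s}`. -/
def Bconst (s : ℕ) : ℕ := 2 ^ (16 * s)

/-- `C(n,s) = e^{(6n)^{3n} (n s + 1 - n)}`. -/
def Cconst (n s : ℕ) : ℝ := Real.exp ((6 * n : ℝ) ^ (3 * n) * (n * s + 1 - n))

/-- `CV(d,s) = (3B(s)+13)d + 27B(s) + C(5,s) + 6C(3,s) + 32`. -/
def CVconst (d s : ℕ) : ℝ :=
  (3 * (Bconst s : ℝ) + 13) * d + 27 * (Bconst s : ℝ) + Cconst 5 s + 6 * Cconst 3 s + 32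

/-- `L₁(d,s) = (d-1)(1 + d(1 + B(s)))`. -/
def L1const (d s : ℕ) : ℕ := (d - 1) * (1 + d * (1 + Bconst s))

/-- `L₂(d,s) = max{(2(C(3,s)+2)+1)d + 1, (d-1)(1 + B(s)(B(s) + C(3,s) + 3))}`. -/
def L2const (d s : ℕ) : ℝ :=
  max ((2 * (Cconst 3 s + 2) + 1) * d + 1)
    (((d : ℝ) - 1) * (1 + (Bconst s : ℝ) * ((Bconst s : ℝ) + Cconst 3 s + 3)))

/-- `L₃(d,s) = ((1 + 3B(s))B(s) + 1)(d-1)`. -/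
def L3const (d s : ℕ) : ℕ := ((1 + 3 * Bconst s) * Bconst s + 1) * (d - 1)

/-- `L₄(d,s) = (C(3,s) + 3)(d-1)`. -/
def L4const (d s : ℕ) : ℝ := (Cconst 3 s + 3) * ((d : ℝ) - 1)

end

/-!
A tail point `R` of `P` enters the cycle `{P}` through a preimage `A ≠ P` of `P`, and there are at
most `d - 1` of these. Put `Q' = φ(Q)`. The cross ratios `x = [R, Q; P, Q']` and `y = [R, A; Q', P]`
satisfy `(1 - x) * (1 - y) = c` with `c` depending only on `A`. Good reduction at a prime `q` makes
`φ` non-expanding for the `q`-adic chordal distance, so the distances along the two-cycle and along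
the orbit of `R` are rigid: outside `S`, `x` is a unit and `y` is an integer whose absolute values
do not depend on `R`. Hence the coordinatewise quotients of any two solutions are `S`-units.

These solutions are counted by height, as for unit equations. Those of small height are separated
by Liouville's inequality. Among those of comparable height, a gap principle for three solutions
allows at most two with nearby logarithm vectors at the places of `S`. For those of large height,
Padé approximants to `(1 - z) ^ n` show that solutions with nearly proportional logarithm vectors
have comparable heights. Each count is a packing argument in `ℝ ^ S`, whence the exponential bound
in `|S|`.
-/

section Counting

open Real

lemma sum_Icc_exp_neg_abs_div_le {M : ℝ} (hM : 0 < M) (J : ℕ) :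
    ∑ j ∈ Finset.Icc (-(J : ℤ)) J, exp (-|(j : ℝ)| / M) ≤ 1 + 2 * M * (1 - exp (-J / M)) := by
  induction J with
  | zero => simp
  | succ J ih =>
    have hIcc : Finset.Icc (-((J + 1 : ℕ) : ℤ)) (J + 1 : ℕ) =
        insert (-((J + 1 : ℕ) : ℤ)) (insert ((J + 1 : ℕ) : ℤ) (Finset.Icc (-(J : ℤ)) J)) := by
      grind
    have hneg : -((J + 1 : ℕ) : ℤ) ∉ insert ((J + 1 : ℕ) : ℤ) (Finset.Icc (-(J : ℤ)) J) := by grind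
    have hpos : ((J + 1 : ℕ) : ℤ) ∉ Finset.Icc (-(J : ℤ)) J := by grind
    have habs : |((J + 1 : ℕ) : ℝ)| = (J + 1 : ℕ) := abs_of_nonneg (by positivity)
    rw [hIcc, Finset.sum_insert hneg, Finset.sum_insert hpos, Int.cast_neg, abs_neg,
      Int.cast_natCast, habs]
    have hstep : exp (-(J : ℝ) / M) = exp (1 / M) * exp (-((J + 1 : ℕ) : ℝ) / M) := by
      rw [← exp_add]
      congr 1
      push_cast
      ring
    have hM' : 1 ≤ M * (exp (1 / M) - 1) := by
      have := add_one_le_exp (1 / M)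
      calc 1 = M * (1 / M) := by field_simp
        _ ≤ M * (exp (1 / M) - 1) := by gcongr; linarith
    have := mul_le_mul_of_nonneg_right hM' (exp_pos (-((J + 1 : ℕ) : ℝ) / M)).le
    rw [hstep] at ih
    linarith

variable {ι α : Type*} [Fintype ι]

/- Chernoff's method: weight the vector `k` by `∏ i, exp (-|k i| / M)`, which is at least
`exp (-card ι)` on `s`, and sum over a whole box containing `s`. -/
lemma card_le_of_sum_abs_le {M : ℝ} (hM : 0 < M) (s : Finset (ι → ℤ))
    (hs : ∀ k ∈ s, ∑ i, |(k i : ℝ)| ≤ M * Fintype.card ι) :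
    (s.card : ℝ) ≤ (exp 1 * (2 * M + 1)) ^ Fintype.card ι := by
  let J := ⌈M * Fintype.card ι⌉₊
  let box : Finset (ι → ℤ) := Fintype.piFinset fun _ ↦ Finset.Icc (-(J : ℤ)) J
  let weight (k : ι → ℤ) : ℝ := ∏ i, exp (-|(k i : ℝ)| / M)
  have hbox : s ⊆ box := fun k hk ↦ by
    refine Fintype.mem_piFinset.mpr fun i ↦ Finset.mem_Icc.mpr (abs_le.mp ?_)
    have hi : |(k i : ℝ)| ≤ J :=
      (Finset.single_le_sum (f := fun i ↦ |(k i : ℝ)|) (fun _ _ ↦ abs_nonneg _)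
        (Finset.mem_univ i)).trans ((hs k hk).trans (Nat.le_ceil _))
    exact_mod_cast hi
  have hweight : ∀ k ∈ s, 1 ≤ exp (Fintype.card ι) * weight k := fun k hk ↦ by
    have : (∑ i, |(k i : ℝ)|) / M ≤ Fintype.card ι := by
      rw [div_le_iff₀ hM, mul_comm]
      exact hs k hk
    simp only [weight]
    rw [← exp_sum, ← exp_add, one_le_exp_iff, ← Finset.sum_div, Finset.sum_neg_distrib, neg_div]
    linarith
  have hsum : ∑ k ∈ box, weight k ≤ (2 * M + 1) ^ Fintype.card ι := by
    rw [← Finset.prod_univ_sum (fun _ ↦ Finset.Icc (-(J : ℤ)) J)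
      (fun _ j ↦ exp (-|(j : ℝ)| / M)), Finset.prod_const, Finset.card_univ]
    refine pow_le_pow_left₀ (Finset.sum_nonneg fun _ _ ↦ (exp_pos _).le)
      ((sum_Icc_exp_neg_abs_div_le hM J).trans ?_) _
    have := mul_pos hM (exp_pos (-(J : ℝ) / M))
    linarith
  calc (s.card : ℝ) = ∑ _k ∈ s, (1 : ℝ) := by simp
    _ ≤ ∑ k ∈ s, exp (Fintype.card ι) * weight k := Finset.sum_le_sum hweight
    _ ≤ ∑ k ∈ box, exp (Fintype.card ι) * weight k :=
      Finset.sum_le_sum_of_subset_of_nonneg hbox fun _ _ _ ↦ by positivity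
    _ ≤ exp (Fintype.card ι) * (2 * M + 1) ^ Fintype.card ι := by
      rw [← Finset.mul_sum]
      gcongr
    _ = (exp 1 * (2 * M + 1)) ^ Fintype.card ι := by
      rw [mul_pow, ← exp_nat_mul, mul_one]

lemma abs_floor_le_abs_add_one (t : ℝ) : |(⌊t⌋ : ℝ)| ≤ |t| + 1 := by
  rw [abs_le]
  constructor
  · linarith [neg_abs_le t, Int.lt_floor_add_one t]
  · linarith [le_abs_self t, Int.floor_le t]

lemma card_le_mul_pow_of_card_le_of_abs_sub_le (E : Finset α) (f : α → ι → ℝ) {L g B : ℝ}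
    (hL : 0 ≤ L) (hg : 0 < g) (hB : 0 ≤ B)
    (hf : ∀ a ∈ E, ∑ i, |f a i| ≤ L * Fintype.card ι)
    (hclose : ∀ F ⊆ E, (∀ a ∈ F, ∀ b ∈ F, ∀ i, |f a i - f b i| ≤ g) → (F.card : ℝ) ≤ B) :
    (E.card : ℝ) ≤ B * (exp 1 * (2 * (L / g + 1) + 1)) ^ Fintype.card ι := by
  let cell (a : α) (i : ι) : ℤ := ⌊f a i / g⌋
  have hfiber : ∀ k ∈ E.image cell, ((E.filter (cell · = k)).card : ℝ) ≤ B := by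
    refine fun k _ ↦ hclose _ (Finset.filter_subset _ _) fun a ha b hb i ↦ ?_
    have hfloor : ⌊f a i / g⌋ = ⌊f b i / g⌋ :=
      congrFun ((Finset.mem_filter.mp ha).2.trans (Finset.mem_filter.mp hb).2.symm) i
    have := Int.abs_sub_lt_one_of_floor_eq_floor hfloor
    rw [← sub_div, abs_div, abs_of_pos hg, div_lt_one hg] at this
    exact this.le
  have himage : ((E.image cell).card : ℝ) ≤ (exp 1 * (2 * (L / g + 1) + 1)) ^ Fintype.card ι := by
    refine card_le_of_sum_abs_le (by positivity) _ (Finset.forall_mem_image.mpr fun a ha ↦ ?_)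
    calc ∑ i, |(cell a i : ℝ)| ≤ ∑ i, (|f a i| / g + 1) := Finset.sum_le_sum fun i _ ↦ by
          simpa only [abs_div, abs_of_pos hg] using abs_floor_le_abs_add_one (f a i / g)
      _ = (∑ i, |f a i|) / g + Fintype.card ι := by simp [Finset.sum_add_distrib, Finset.sum_div]
      _ ≤ (L * Fintype.card ι) / g + Fintype.card ι := by grw [hf a ha]
      _ = (L / g + 1) * Fintype.card ι := by ring
  calc (E.card : ℝ) = ∑ k ∈ E.image cell, ((E.filter (cell · = k)).card : ℝ) := by
        exact_mod_cast Finset.card_eq_sum_card_image cell E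
    _ ≤ (E.image cell).card * B := by
        simpa only [nsmul_eq_mul] using Finset.sum_le_card_nsmul _ _ _ hfiber
    _ ≤ B * (exp 1 * (2 * (L / g + 1) + 1)) ^ Fintype.card ι := by
        rw [mul_comm]
        gcongr

lemma card_le_mul_pow_of_card_le_of_abs_sub_le_pair [Nonempty ι] (E : Finset α) (f g : α → ι → ℝ)
    {L δ B : ℝ} (hL : 0 ≤ L) (hδ : 0 < δ) (hB : 0 ≤ B)
    (hfg : ∀ a ∈ E, ∑ i, |f a i| + ∑ i, |g a i| ≤ L)
    (hclose : ∀ F ⊆ E, (∀ a ∈ F, ∀ b ∈ F, ∀ i, |f a i - f b i| ≤ δ / Fintype.card ι) →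
      (∀ a ∈ F, ∀ b ∈ F, ∀ i, |g a i - g b i| ≤ δ / Fintype.card ι) → (F.card : ℝ) ≤ B) :
    (E.card : ℝ) ≤ B * (exp 1 * (L / δ + 3)) ^ (2 * Fintype.card ι) := by
  have hcount := card_le_mul_pow_of_card_le_of_abs_sub_le E (fun a ↦ Sum.elim (f a) (g a))
    (L := L / (2 * Fintype.card ι)) (g := δ / Fintype.card ι) (by positivity) (by positivity) hB
    (fun a ha ↦ ?_) fun F hF h ↦ hclose F hF (fun a ha b hb i ↦ h a ha b hb (.inl i))
      fun a ha b hb i ↦ h a ha b hb (.inr i)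
  · convert hcount using 3
    · field_simp
      ring
    · rw [Fintype.card_sum, two_mul]
  · rw [Fintype.sum_sum_type, Fintype.card_sum]
    refine (hfg a ha).trans_eq ?_
    push_cast
    field_simp
    ring

end Counting

section Heights

open Height AdmissibleAbsValues Real
open scoped Matrix

variable {K ι κ : Type*} [Field K] [AdmissibleAbsValues K] [Finite ι] [Finite κ]

lemma logHeight_le_logHeight_add {r : ι → K} {s : κ → K} (hr : r ≠ 0) (hs : s ≠ 0) {B : ℝ}
    (hB : 0 < B)
    (harch : ∀ v ∈ archAbsVal (K := K), ∀ i, v (r i) ≤ B * ⨆ j, v (s j))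
    (hnonarch : ∀ v ∈ nonarchAbsVal (K := K), ∀ i, v (r i) ≤ ⨆ j, v (s j)) :
    logHeight r ≤ logHeight s + totalWeight K * log B := by
  have := (Function.ne_iff.mp hr).nonempty
  have := (Function.ne_iff.mp hs).nonempty
  have hnonneg (v : AbsoluteValue K ℝ) : 0 ≤ ⨆ i, v (r i) := Real.iSup_nonneg fun i ↦ v.nonneg _
  suffices mulHeight r ≤ B ^ totalWeight K * mulHeight s by
    simp only [logHeight_eq_log_mulHeight]
    grw [this]
    rw [log_mul (by positivity) (by positivity), log_pow, add_comm]
  rw [mulHeight_eq hr, mulHeight_eq hs, totalWeight, ← Multiset.prod_replicate,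
    ← Multiset.map_const', ← mul_assoc, ← Multiset.prod_map_mul]
  gcongr
  · exact finprod_nonneg fun v ↦ hnonneg v.val
  · exact Multiset.prod_map_nonneg fun v hv ↦ (hnonneg v).trans (ciSup_le (harch v hv))
  · exact Multiset.prod_map_le_prod_map₀ _ _ (fun v _ ↦ hnonneg v) fun v hv ↦
      ciSup_le (harch v hv)
  · exact finprod_le_finprod (by fun_prop (disch := assumption)) (fun v ↦ hnonneg v.val)
      (by fun_prop (disch := assumption)) fun v ↦ ciSup_le (hnonarch v.val v.prop)

lemma logHeight_sub_comp_le (s : κ → K) (f g : ι → κ) :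
    logHeight (fun i ↦ s (f i) - s (g i)) ≤ logHeight s + totalWeight K * log 2 := by
  rcases eq_or_ne (fun i ↦ s (f i) - s (g i)) 0 with hr | hr
  · rw [hr, logHeight_zero]
    have := logHeight_nonneg s
    positivity
  have hs : s ≠ 0 := by
    rintro rfl
    exact hr (by ext; simp)
  have hle (v : AbsoluteValue K ℝ) (j : κ) : v (s j) ≤ ⨆ j, v (s j) :=
    le_ciSup (Set.finite_range fun j ↦ v (s j)).bddAbove j
  refine logHeight_le_logHeight_add hr hs two_pos (fun v _ i ↦ ?_) fun v hv i ↦ ?_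
  · rw [sub_eq_add_neg, two_mul]
    exact (v.add_le _ _).trans (add_le_add (hle v _) ((v.map_neg _).trans_le (hle v _)))
  · rw [sub_eq_add_neg]
    exact (isNonarchimedean v hv _ _).trans
      (max_le (hle v _) ((v.map_neg _).trans_le (hle v _)))

lemma logHeight_le_mul_logHeight₁_add {r : ι → K} (hr : r ≠ 0) (x : K) (n : ℕ) {B : ℝ}
    (hB : 0 < B)
    (harch : ∀ v ∈ archAbsVal (K := K), ∀ i, v (r i) ≤ B * max (v x) 1 ^ n)
    (hnonarch : ∀ v ∈ nonarchAbsVal (K := K), ∀ i, v (r i) ≤ max (v x) 1 ^ n) :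
    logHeight r ≤ n * logHeight₁ x + totalWeight K * log B := by
  have hmax (v : AbsoluteValue K ℝ) : max (v x) 1 ^ n ≤ ⨆ j, v ((![x, 1] ^ n) j) := by
    have hle (j : Fin 2) : v ((![x, 1] ^ n) j) ≤ ⨆ j, v ((![x, 1] ^ n) j) :=
      le_ciSup (f := fun j ↦ v ((![x, 1] ^ n) j)) (Set.finite_range _).bddAbove j
    rcases max_choice (v x) 1 with h | h <;> rw [h]
    · simpa using hle 0
    · simpa using hle 1
  rw [logHeight₁_eq_logHeight, ← logHeight_pow]
  refine logHeight_le_logHeight_add hr (fun h ↦ by simpa using congrFun h 1) hB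
    (fun v hv i ↦ (harch v hv i).trans ?_) fun v hv i ↦ (hnonarch v hv i).trans (hmax v)
  gcongr
  exact hmax v

lemma logHeight₁_div_le (x y : K) : logHeight₁ (x / y) ≤ logHeight₁ x + logHeight₁ y := by
  rw [div_eq_mul_inv, ← logHeight₁_inv y]
  exact logHeight₁_mul_le x y⁻¹

lemma logHeight₁_one_sub_le (x : K) :
    logHeight₁ (1 - x) ≤ logHeight₁ x + totalWeight K * log 2 := by
  simpa [add_comm] using logHeight₁_sub_le 1 x

/-- Liouville's inequality for `x - 1`. -/
lemma mul_totalWeight_le_logHeight₁ {x : K} (hx : x ≠ 1) {t : ℝ}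
    (h : ∀ v ∈ archAbsVal (K := K), v (x - 1) ≤ exp (-t)) :
    t * totalWeight K ≤ logHeight₁ x := by
  have hle := logHeight_le_mul_logHeight₁_add (r := fun _ : Unit ↦ x - 1)
    (fun h0 ↦ hx (sub_eq_zero.mp (congrFun h0 ()))) x 1 (exp_pos (-t))
    (fun v hv _ ↦ (h v hv).trans
      (le_mul_of_one_le_right (exp_pos _).le (one_le_pow₀ (le_max_right _ _))))
    fun v hv _ ↦ by
      simpa [sub_eq_add_neg, v.map_neg] using isNonarchimedean v hv x (-1)
  rw [logHeight_eq_zero_of_subsingleton, log_exp] at hle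
  push_cast at hle
  linarith

lemma exists_eq_smul_cross {F : Type*} [Field F] {e r r' : Fin 3 → F} (hr : e ⬝ᵥ r = 0)
    (hr' : e ⬝ᵥ r' = 0) (hcross : r ⨯₃ r' ≠ 0) : ∃ c : F, e = c • r ⨯₃ r' := by
  have hzero : r ⨯₃ r' ⨯₃ e = 0 := by
    rw [cross_cross_eq_smul_sub_smul, dotProduct_comm r, dotProduct_comm r', hr, hr', zero_smul,
      zero_smul, sub_zero]
  have hdep : ¬ LinearIndependent F ![r ⨯₃ r', e] :=
    fun h ↦ crossProduct_ne_zero_iff_linearIndependent.mpr h hzero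
  rw [LinearIndependent.pair_iff' hcross] at hdep
  push Not at hdep
  exact hdep.imp fun c hc ↦ hc.symm

lemma logHeight_cross_le (r r' : Fin 3 → K) :
    logHeight (r ⨯₃ r') ≤ logHeight r + logHeight r' + totalWeight K * log 2 := by
  rcases eq_or_ne r 0 with rfl | hr
  · have := logHeight_nonneg r'
    simp only [map_zero, LinearMap.zero_apply, logHeight_zero]
    positivity
  rcases eq_or_ne r' 0 with rfl | hr'
  · have := logHeight_nonneg r
    simp only [map_zero, logHeight_zero]
    positivity
  rw [← logHeight_fun_mul_eq hr hr']
  refine le_trans (le_of_eq ?_) (logHeight_sub_comp_le (fun a : Fin 3 × Fin 3 ↦ r a.1 * r' a.2)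
    ![(1, 2), (2, 0), (0, 1)] ![(2, 1), (0, 2), (1, 0)])
  congr 1
  ext i
  fin_cases i <;> rfl

lemma logHeight_le_of_dotProduct_eq_zero {e r r' : Fin 3 → K} (hr : e ⬝ᵥ r = 0)
    (hr' : e ⬝ᵥ r' = 0) (hcross : r ⨯₃ r' ≠ 0) :
    logHeight e ≤ logHeight r + logHeight r' + totalWeight K * log 2 := by
  obtain ⟨c, rfl⟩ := exists_eq_smul_cross hr hr' hcross
  refine le_trans ?_ (logHeight_cross_le r r')
  rcases eq_or_ne c 0 with rfl | hc
  · simpa using logHeight_nonneg _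
  · exact (logHeight_smul_eq_logHeight _ hc).le

end Heights

section LocalLogarithms

open Height Real NumberField.HeightOneSpectrum

variable {K : Type*} [Field K] [NumberField K]

lemma abs_log_eq_posLog_add_posLog_inv (t : ℝ) : |log t| = log⁺ t + log⁺ t⁻¹ := by
  linarith [half_mul_log_add_log_abs (x := t), posLog_sub_posLog_inv (x := t)]

lemma logHeight₁_eq_sum_posLog_add_finsum_posLog (x : K) :
    logHeight₁ x = ∑ v : InfinitePlace K, v.mult * log⁺ (v x) +
      ∑ᶠ q : HeightOneSpectrum (𝓞 K), log⁺ (adicAbv K q x) := by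
  rw [NumberField.logHeight₁_eq,
    ← finsum_comp_equiv (NumberField.FinitePlace.equivHeightOneSpectrum (K := K)).symm]
  simp only [NumberField.FinitePlace.equivHeightOneSpectrum_symm_apply,
    NumberField.FinitePlace.norm_embedding]

lemma hasFiniteSupport_posLog_adicAbv (x : K) :
    (fun q : HeightOneSpectrum (𝓞 K) ↦ log⁺ (adicAbv K q x)).HasFiniteSupport := by
  rcases eq_or_ne x 0 with rfl | hx
  · simp [Function.HasFiniteSupport]
  have hfinite := (NumberField.FinitePlace.hasFiniteMulSupport hx).comp_of_injective
    NumberField.FinitePlace.equivHeightOneSpectrum.symm.injective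
  refine hfinite.subset fun q hq ↦ ?_
  simp only [Function.mem_support, Function.mem_mulSupport, Function.comp_apply,
    NumberField.FinitePlace.equivHeightOneSpectrum_symm_apply,
    NumberField.FinitePlace.norm_embedding] at hq ⊢
  exact fun h ↦ hq (by simp [h])

/-- The vector of the normalized logarithms of `x` at the places of `S`, where `S` consists of the
infinite places and of the primes in `T`. -/
noncomputable def placeLog (T : Finset (HeightOneSpectrum (𝓞 K))) (x : K) :
    InfinitePlace K ⊕ T → ℝ :=
  Sum.elim (fun v ↦ v.mult * log (v x)) fun q ↦ log (adicAbv K q.1 x)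

variable (T : Finset (HeightOneSpectrum (𝓞 K)))

lemma sum_abs_placeLog (x : K) :
    ∑ i, |placeLog T x i| =
      ∑ v : InfinitePlace K, v.mult * |log (v x)| + ∑ q ∈ T, |log (adicAbv K q x)| := by
  rw [Fintype.sum_sum_type, ← Finset.sum_coe_sort T]
  simp [placeLog, abs_mul]

lemma sum_posLog_adicAbv_le_finsum (x : K) :
    ∑ q ∈ T, log⁺ (adicAbv K q x) ≤ ∑ᶠ q : HeightOneSpectrum (𝓞 K), log⁺ (adicAbv K q x) := by
  rw [← finsum_mem_coe_finset, finsum_mem_def]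
  exact finsum_le_finsum' (T.finite_toSet.subset Set.support_indicator_subset)
    (hasFiniteSupport_posLog_adicAbv x) (Set.indicator_le_self' fun _ _ ↦ posLog_nonneg)

lemma sum_abs_placeLog_le (x : K) : ∑ i, |placeLog T x i| ≤ 2 * logHeight₁ x := by
  have hx := sum_posLog_adicAbv_le_finsum T x
  have hx_inv := sum_posLog_adicAbv_le_finsum T x⁻¹
  rw [sum_abs_placeLog, two_mul]
  nth_rewrite 2 [← logHeight₁_inv x]
  simp only [logHeight₁_eq_sum_posLog_add_finsum_posLog, abs_log_eq_posLog_add_posLog_inv, mul_add,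
    Finset.sum_add_distrib, map_inv₀] at hx_inv ⊢
  linarith

lemma logHeight₁_le_sum_abs_placeLog_add {x c : K} {n : ℕ}
    (h : ∀ q ∉ T, adicAbv K q x ≤ max (adicAbv K q c) 1 ^ n) :
    logHeight₁ x ≤ ∑ i, |placeLog T x i| + n * logHeight₁ c := by
  have hposLog (t : ℝ) : log⁺ t ≤ |log t| := by
    rw [abs_log_eq_posLog_add_posLog_inv]
    exact le_add_of_nonneg_right posLog_nonneg
  have hfinite : ∑ᶠ q : HeightOneSpectrum (𝓞 K), log⁺ (adicAbv K q x) ≤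
      ∑ q ∈ T, |log (adicAbv K q x)| +
        n * ∑ᶠ q : HeightOneSpectrum (𝓞 K), log⁺ (adicAbv K q c) := by
    have hT : (Set.indicator (T : Set (HeightOneSpectrum (𝓞 K)))
        fun q ↦ |log (adicAbv K q x)|).HasFiniteSupport :=
      T.finite_toSet.subset Set.support_indicator_subset
    have hc := hasFiniteSupport_posLog_adicAbv c
    have hnc : (fun q : HeightOneSpectrum (𝓞 K) ↦ n * log⁺ (adicAbv K q c)).HasFiniteSupport :=
      hc.subset (Function.support_const_smul_subset (n : ℝ) _)
    rw [← finsum_mem_coe_finset, finsum_mem_def, mul_finsum' _ _ hc, ← finsum_add_distrib hT hnc]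
    refine finsum_le_finsum' (hasFiniteSupport_posLog_adicAbv x)
      (Function.HasFiniteSupport.add hT hnc) fun q ↦ ?_
    by_cases hq : q ∈ T
    · rw [Set.indicator_of_mem (Finset.mem_coe.mpr hq)]
      exact le_add_of_le_of_nonneg (hposLog _) (mul_nonneg n.cast_nonneg posLog_nonneg)
    · rw [Set.indicator_of_notMem (by simpa using hq), zero_add,
        posLog_eq_log_max_one (by positivity), posLog_eq_log_max_one (by positivity), ← log_pow,
        max_comm 1 (adicAbv K q c)]
      exact log_le_log (by positivity) (max_le (one_le_pow₀ (le_max_right _ _)) (h q hq))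
  have hinfinite : ∑ v : InfinitePlace K, v.mult * log⁺ (v x) ≤
      ∑ v : InfinitePlace K, v.mult * |log (v x)| := by
    gcongr with v
    exact hposLog _
  have hc : 0 ≤ n * ∑ v : InfinitePlace K, (v.mult : ℝ) * log⁺ (v c) :=
    mul_nonneg n.cast_nonneg <| Finset.sum_nonneg fun v _ ↦
      mul_nonneg v.mult.cast_nonneg posLog_nonneg
  rw [sum_abs_placeLog, logHeight₁_eq_sum_posLog_add_finsum_posLog x,
    logHeight₁_eq_sum_posLog_add_finsum_posLog c]
  linarith

end LocalLogarithms

section PadeApproximation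

open Height AdmissibleAbsValues Finset
open scoped Nat Matrix

/-- Up to sign, the coefficients of `padeNumerator a c` (for `n = a`) and of `padeRemainder a c`
(for `n = c`). -/
def padeCoeff (a c n j : ℕ) : ℕ := (a + j).choose j * (2 * a + c + 1).choose (n - j)

/-- The polynomial `E` of degree `a` which is proportional to
`z ^ (-(a + c + 1)) * ∫ t in 0..z, t ^ a * (1 - t) ^ a * (z - t) ^ c`; it occurs in the identity
`z ^ (a + c + 1) * E z + (-1) ^ c * (1 - z) ^ (a + c + 1) * E (1 - z) = B z`, where
`B = padeRemainder a c`. -/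
noncomputable def padeNumerator {R : Type*} [CommRing R] (a c : ℕ) (z : R) : R :=
  ∑ j ∈ range (a + 1), (-1) ^ j * (padeCoeff a c a j : R) * z ^ j

/-- The polynomial of degree `c` which is proportional to
`∫ t in 0..1, t ^ a * (1 - t) ^ a * (z - t) ^ c`, the right-hand side of the Padé identity for
`padeNumerator a c`. -/
noncomputable def padeRemainder {R : Type*} [CommRing R] (a c : ℕ) (z : R) : R :=
  ∑ j ∈ range (c + 1), (-1) ^ j * (padeCoeff a c c j : R) * z ^ (c - j)

lemma map_padeNumerator {R S : Type*} [CommRing R] [CommRing S] (f : R →+* S) (a c : ℕ) (z : R) :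
    f (padeNumerator a c z) = padeNumerator a c (f z) := by
  simp [padeNumerator]

lemma map_padeRemainder {R S : Type*} [CommRing R] [CommRing S] (f : R →+* S) (a c : ℕ) (z : R) :
    f (padeRemainder a c z) = padeRemainder a c (f z) := by
  simp [padeRemainder]

lemma integral_pow_mul_one_sub_pow (p q : ℕ) :
    ∫ t in (0 : ℝ)..1, t ^ p * (1 - t) ^ q = (p ! * q ! : ℝ) / (p + q + 1)! := by
  have hbeta := Complex.Gamma_mul_Gamma_eq_betaIntegral (s := p + 1) (t := q + 1)
    (by simp only [Complex.add_re, Complex.natCast_re, Complex.one_re]; positivity)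
    (by simp only [Complex.add_re, Complex.natCast_re, Complex.one_re]; positivity)
  have hintegral : Complex.betaIntegral (p + 1) (q + 1) =
      ((∫ t in (0 : ℝ)..1, t ^ p * (1 - t) ^ q : ℝ) : ℂ) := by
    rw [Complex.betaIntegral, ← intervalIntegral.integral_ofReal]
    simp
  rw [hintegral, show (p + 1 + (q + 1) : ℂ) = (p + q + 1 : ℕ) + 1 by push_cast; ring,
    Complex.Gamma_nat_eq_factorial, Complex.Gamma_nat_eq_factorial,
    Complex.Gamma_nat_eq_factorial] at hbeta
  rw [eq_div_iff (by positivity), mul_comm]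
  exact_mod_cast hbeta.symm

lemma choose_mul_beta_eq (a b c j : ℕ) (hj : j ≤ b) :
    (b.choose j : ℝ) * ((a + j)! * c ! / (a + j + c + 1)!) =
      (a ! * b ! * c ! / (a + b + c + 1)!) *
        ((a + j).choose j * (a + b + c + 1).choose (b - j) : ℕ) := by
  rw [Nat.cast_mul, Nat.cast_choose ℝ hj, Nat.cast_choose ℝ (Nat.le_add_left j a),
    Nat.cast_choose ℝ (show b - j ≤ a + b + c + 1 by omega),
    show a + b + c + 1 - (b - j) = a + j + c + 1 by omega, Nat.add_sub_cancel]
  have := Nat.factorial_ne_zero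
  field_simp

lemma integral_eq_mul_padeNumerator (a c : ℕ) (z : ℝ) :
    ∫ t in (0 : ℝ)..z, t ^ a * (1 - t) ^ a * (z - t) ^ c =
      (a ! * a ! * c ! / (2 * a + c + 1)! : ℝ) * (z ^ (a + c + 1) * padeNumerator a c z) := by
  have hexpand (t : ℝ) : (z * t) ^ a * (1 - z * t) ^ a * (z - z * t) ^ c =
      ∑ j ∈ range (a + 1), (z ^ (a + c) * ((-1) ^ j * z ^ j * a.choose j)) *
        (t ^ (a + j) * (1 - t) ^ c) := by
    rw [sub_eq_neg_add 1, add_pow, Finset.mul_sum, Finset.sum_mul]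
    refine Finset.sum_congr rfl fun j _ ↦ ?_
    rw [show z - z * t = z * (1 - t) by ring, neg_eq_neg_one_mul, mul_pow z (1 - t)]
    ring
  have hsubst := intervalIntegral.smul_integral_comp_mul_left (a := 0) (b := 1)
    (fun t : ℝ ↦ t ^ a * (1 - t) ^ a * (z - t) ^ c) z
  rw [mul_zero, mul_one] at hsubst
  simp only [← hsubst, hexpand]
  rw [intervalIntegral.integral_finsetSum
    fun j _ ↦ Continuous.intervalIntegrable (by fun_prop) _ _, padeNumerator, smul_eq_mul,
    Finset.mul_sum, Finset.mul_sum, Finset.mul_sum]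
  refine Finset.sum_congr rfl fun j hj ↦ ?_
  have hcoeff := choose_mul_beta_eq a a c j (Finset.mem_range_succ_iff.mp hj)
  rw [← two_mul] at hcoeff
  rw [intervalIntegral.integral_const_mul, integral_pow_mul_one_sub_pow, padeCoeff]
  linear_combination (z ^ (a + c + 1) * ((-1) ^ j * z ^ j)) * hcoeff

lemma integral_eq_mul_padeRemainder (a c : ℕ) (z : ℝ) :
    ∫ t in (0 : ℝ)..1, t ^ a * (1 - t) ^ a * (z - t) ^ c =
      (a ! * a ! * c ! / (2 * a + c + 1)! : ℝ) * padeRemainder a c z := by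
  have hexpand (t : ℝ) : t ^ a * (1 - t) ^ a * (z - t) ^ c =
      ∑ j ∈ range (c + 1), ((-1) ^ j * z ^ (c - j) * c.choose j) *
        (t ^ (a + j) * (1 - t) ^ a) := by
    rw [sub_eq_neg_add z, add_pow, Finset.mul_sum]
    refine Finset.sum_congr rfl fun j _ ↦ ?_
    rw [neg_eq_neg_one_mul]
    ring
  simp only [hexpand]
  rw [intervalIntegral.integral_finsetSum
    fun j _ ↦ Continuous.intervalIntegrable (by fun_prop) _ _, padeRemainder, Finset.mul_sum]
  refine Finset.sum_congr rfl fun j hj ↦ ?_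
  have hcoeff := choose_mul_beta_eq a c a j (Finset.mem_range_succ_iff.mp hj)
  rw [show a + c + a + 1 = 2 * a + c + 1 by ring] at hcoeff
  rw [intervalIntegral.integral_const_mul, integral_pow_mul_one_sub_pow, padeCoeff]
  linear_combination ((-1) ^ j * z ^ (c - j)) * hcoeff

lemma pade_identity_real (a c : ℕ) (z : ℝ) :
    z ^ (a + c + 1) * padeNumerator a c z +
      (-1) ^ c * ((1 - z) ^ (a + c + 1) * padeNumerator a c (1 - z)) = padeRemainder a c z := by
  let f (t : ℝ) : ℝ := t ^ a * (1 - t) ^ a * (z - t) ^ c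
  have hf : Continuous f := by fun_prop
  have hreflect : ∫ t in z..1, f t =
      (-1) ^ c * ∫ t in (0 : ℝ)..(1 - z), t ^ a * (1 - t) ^ a * (1 - z - t) ^ c := by
    have hsubst := intervalIntegral.integral_comp_sub_left (a := 0) (b := 1 - z) f 1
    rw [sub_zero, sub_sub_cancel] at hsubst
    rw [← hsubst, ← intervalIntegral.integral_const_mul]
    congr 1 with t
    simp only [f]
    rw [show z - (1 - t) = -1 * (1 - z - t) by ring, mul_pow]
    ring
  have hadd := intervalIntegral.integral_add_adjacent_intervals
    (hf.intervalIntegrable (μ := MeasureTheory.volume) 0 z) (hf.intervalIntegrable z 1)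
  rw [hreflect, integral_eq_mul_padeNumerator, integral_eq_mul_padeNumerator,
    integral_eq_mul_padeRemainder] at hadd
  refine mul_left_cancel₀ (a := (a ! * a ! * c ! / (2 * a + c + 1)! : ℝ)) (by positivity) ?_
  linear_combination hadd

lemma pade_identity_polynomial (a c : ℕ) :
    (Polynomial.X : Polynomial ℤ) ^ (a + c + 1) * padeNumerator a c Polynomial.X +
      (-1) ^ c * ((1 - Polynomial.X) ^ (a + c + 1) * padeNumerator a c (1 - Polynomial.X)) =
        padeRemainder a c Polynomial.X := by
  refine Polynomial.map_injective (Int.castRingHom ℝ) Int.cast_injective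
    (Polynomial.funext fun z ↦ ?_)
  let f : Polynomial ℤ →+* ℝ :=
    (Polynomial.evalRingHom z).comp (Polynomial.mapRingHom (Int.castRingHom ℝ))
  change f _ = f _
  simp only [map_add, map_mul, map_pow, map_neg, map_one, map_sub, map_padeNumerator,
    map_padeRemainder, show f Polynomial.X = z by simp [f]]
  exact pade_identity_real a c z

lemma pade_identity {R : Type*} [CommRing R] (a c : ℕ) (z : R) :
    z ^ (a + c + 1) * padeNumerator a c z +
      (-1) ^ c * ((1 - z) ^ (a + c + 1) * padeNumerator a c (1 - z)) = padeRemainder a c z := by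
  have h := congrArg (Polynomial.eval₂RingHom (Int.castRingHom R) z) (pade_identity_polynomial a c)
  simpa only [map_add, map_mul, map_pow, map_neg, map_one, map_sub, map_padeNumerator,
    map_padeRemainder, Polynomial.coe_eval₂RingHom, Polynomial.eval₂_X] using h

section Nondegeneracy

variable {R : Type*} [CommRing R]

lemma padeNumerator_X (a c : ℕ) : (padeNumerator a c .X : Polynomial R) =
    ∑ j ∈ range (a + 1), .C ((-1) ^ j * (padeCoeff a c a j : R)) * .X ^ j := by
  simp [padeNumerator]

lemma padeRemainder_X (a c : ℕ) : (padeRemainder a c .X : Polynomial R) =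
    ∑ j ∈ range (c + 1), .C ((-1) ^ j * (padeCoeff a c c j : R)) * .X ^ (c - j) := by
  simp [padeRemainder]

lemma natDegree_padeNumerator_le (a c : ℕ) :
    (padeNumerator a c .X : Polynomial R).natDegree ≤ a := by
  rw [padeNumerator_X]
  exact Polynomial.natDegree_sum_le_of_forall_le _ _ fun j hj ↦
    (Polynomial.natDegree_C_mul_X_pow_le _ _).trans (mem_range_succ_iff.mp hj)

lemma natDegree_padeRemainder_le (a c : ℕ) :
    (padeRemainder a c .X : Polynomial R).natDegree ≤ c := by
  rw [padeRemainder_X]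
  exact Polynomial.natDegree_sum_le_of_forall_le _ _ fun j _ ↦
    (Polynomial.natDegree_C_mul_X_pow_le _ _).trans (Nat.sub_le c j)

lemma coeff_padeNumerator_ne_zero [CharZero R] (a c : ℕ) :
    (padeNumerator a c .X : Polynomial R).coeff a ≠ 0 := by
  rw [padeNumerator_X, Polynomial.finsetSum_coeff, Finset.sum_eq_single_of_mem a (by simp)
    fun j _ hj ↦ (Polynomial.coeff_C_mul_X_pow ..).trans (if_neg hj.symm),
    Polynomial.coeff_C_mul_X_pow, if_pos rfl, ne_eq, (isUnit_one.neg.pow a).mul_right_eq_zero,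
    Nat.cast_eq_zero]
  exact mul_ne_zero (Nat.choose_pos (by omega)).ne' (Nat.choose_pos (by omega)).ne'

lemma coeff_padeRemainder_ne_zero [CharZero R] (a c : ℕ) :
    (padeRemainder a c .X : Polynomial R).coeff c ≠ 0 := by
  rw [padeRemainder_X, Polynomial.finsetSum_coeff, Finset.sum_eq_single_of_mem 0 (by simp)
    fun j hj hj0 ↦ (Polynomial.coeff_C_mul_X_pow ..).trans
      (if_neg (by rw [mem_range_succ_iff] at hj; omega)),
    Polynomial.coeff_C_mul_X_pow, if_pos c.sub_zero.symm, pow_zero, one_mul, Nat.cast_ne_zero]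
  exact mul_ne_zero (Nat.choose_pos (by omega)).ne' (Nat.choose_pos (by omega)).ne'

variable [IsDomain R] [CharZero R]

/-- The Padé identity shows that `(1 - X) ^ (2 * k + 3)` times this determinant is a polynomial of
degree `2 * k + 3`, so that the determinant is a nonzero constant. -/
lemma exists_padeNumerator_det_eq_C (k : ℕ) : ∃ κ : R, κ ≠ 0 ∧
    (padeNumerator (k + 1) (k + 1) .X : Polynomial R) *
        ((-1) ^ (k + 2) * padeNumerator k (k + 2) (1 - .X)) -
      padeNumerator k (k + 2) .X * ((-1) ^ (k + 1) * padeNumerator (k + 1) (k + 1) (1 - .X)) =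
        .C κ := by
  set E : Polynomial R := padeNumerator (k + 1) (k + 1) .X
  set E' : Polynomial R := padeNumerator k (k + 2) .X
  set B : Polynomial R := padeRemainder (k + 1) (k + 1) .X with hB
  set B' : Polynomial R := padeRemainder k (k + 2) .X with hB'
  set Δ := E * ((-1) ^ (k + 2) * padeNumerator k (k + 2) (1 - .X)) -
    E' * ((-1) ^ (k + 1) * padeNumerator (k + 1) (k + 1) (1 - .X)) with hΔ
  have hfactor : E * B' - E' * B = (1 - .X) ^ (2 * k + 3) * Δ := by
    rw [hB, hB', ← pade_identity, ← pade_identity, hΔ]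
    ring
  have hdegEB' : (E * B').natDegree ≤ 2 * k + 3 :=
    (Polynomial.natDegree_mul_le_of_le (natDegree_padeNumerator_le _ _)
      (natDegree_padeRemainder_le _ _)).trans (by omega)
  have hdegE'B : (E' * B).natDegree ≤ 2 * k + 1 :=
    (Polynomial.natDegree_mul_le_of_le (natDegree_padeNumerator_le _ _)
      (natDegree_padeRemainder_le _ _)).trans (by omega)
  have hcoeff : (E * B' - E' * B).coeff (2 * k + 3) ≠ 0 := by
    rw [Polynomial.coeff_sub, show 2 * k + 3 = k + 1 + (k + 2) by ring,
      Polynomial.coeff_mul_add_eq_of_natDegree_le (natDegree_padeNumerator_le _ _)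
        (natDegree_padeRemainder_le _ _),
      Polynomial.coeff_eq_zero_of_natDegree_lt (p := E' * B) (by omega), sub_zero]
    exact mul_ne_zero (coeff_padeNumerator_ne_zero _ _) (coeff_padeRemainder_ne_zero _ _)
  have hne : E * B' - E' * B ≠ 0 := fun h ↦ hcoeff (by rw [h, Polynomial.coeff_zero])
  have hdeg : (E * B' - E' * B).natDegree ≤ 2 * k + 3 :=
    (Polynomial.natDegree_sub_le _ _).trans (max_le hdegEB' (by omega))
  rw [hfactor] at hdeg hne
  have hdeg_one_sub : (1 - .X : Polynomial R).natDegree = 1 := by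
    rw [← Polynomial.natDegree_neg, neg_sub, ← Polynomial.C_1, Polynomial.natDegree_X_sub_C]
  rw [Polynomial.natDegree_mul (left_ne_zero_of_mul hne) (right_ne_zero_of_mul hne),
    Polynomial.natDegree_pow, hdeg_one_sub] at hdeg
  have hC := Polynomial.eq_C_of_natDegree_le_zero (p := Δ) (by omega)
  exact ⟨Δ.coeff 0, fun h0 ↦ right_ne_zero_of_mul hne (by rw [hC, h0, Polynomial.C_0]), hC⟩

lemma padeNumerator_det_ne_zero (k : ℕ) (z : R) :
    padeNumerator (k + 1) (k + 1) z * ((-1) ^ (k + 2) * padeNumerator k (k + 2) (1 - z)) -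
      padeNumerator k (k + 2) z * ((-1) ^ (k + 1) * padeNumerator (k + 1) (k + 1) (1 - z)) ≠ 0 := by
  obtain ⟨κ, hκ, h⟩ := exists_padeNumerator_det_eq_C (R := R) k
  have hz := congrArg (Polynomial.evalRingHom z) h
  simp only [map_mul, map_pow, map_neg, map_one, map_sub, map_padeNumerator,
    Polynomial.coe_evalRingHom, Polynomial.eval_X, Polynomial.eval_C] at hz
  rwa [hz]

end Nondegeneracy

section Bounds

lemma sum_range_choose_sub_le {N n : ℕ} (h : n ≤ N) :
    ∑ j ∈ range (n + 1), N.choose (n - j) ≤ 2 ^ N := by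
  rw [Finset.sum_flip, ← Nat.sum_range_choose]
  exact Finset.sum_le_sum_of_subset (range_mono (by omega))

lemma sum_padeCoeff_le {a c n : ℕ} (h : n ≤ 2 * a + c + 1) :
    ∑ j ∈ range (n + 1), padeCoeff a c n j ≤ 2 ^ (3 * a + c + n + 1) := by
  calc ∑ j ∈ range (n + 1), padeCoeff a c n j
      ≤ ∑ j ∈ range (n + 1), 2 ^ (a + n) * (2 * a + c + 1).choose (n - j) := by
        refine Finset.sum_le_sum fun j hj ↦ Nat.mul_le_mul_right _ ?_
        rw [mem_range_succ_iff] at hj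
        exact (Nat.choose_le_two_pow _ _).trans (Nat.pow_le_pow_right two_pos (by omega))
    _ ≤ 2 ^ (a + n) * 2 ^ (2 * a + c + 1) := by
        rw [← Finset.mul_sum]
        exact Nat.mul_le_mul_left _ (sum_range_choose_sub_le h)
    _ = 2 ^ (3 * a + c + n + 1) := by ring

variable {K : Type*} [Field K] {v : AbsoluteValue K ℝ} {z : K} {M : ℝ} {n : ℕ} {s : Finset ℕ}
  {w e : ℕ → ℕ}

lemma abv_sum_natCast_mul_pow_le (he : ∀ j ∈ s, e j ≤ n) (hM : 1 ≤ M) (hz : v z ≤ M) :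
    v (∑ j ∈ s, (-1) ^ j * (w j : K) * z ^ e j) ≤ (∑ j ∈ s, w j : ℕ) * M ^ n := by
  rw [Nat.cast_sum, Finset.sum_mul]
  refine (v.sum_le _ _).trans (Finset.sum_le_sum fun j hj ↦ ?_)
  rw [map_mul, map_mul, map_pow, map_pow, v.map_neg, map_one, one_pow, one_mul]
  have := (pow_le_pow_left₀ (v.nonneg z) hz _).trans (pow_le_pow_right₀ hM (he j hj))
  gcongr
  exact v.apply_nat_le_self _

lemma abv_sum_natCast_mul_pow_le_of_isNonarchimedean (hv : IsNonarchimedean v)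
    (he : ∀ j ∈ s, e j ≤ n) (hM : 1 ≤ M) (hz : v z ≤ M) :
    v (∑ j ∈ s, (-1) ^ j * (w j : K) * z ^ e j) ≤ M ^ n := by
  refine hv.apply_sum_le.trans (Real.iSup_le (fun ⟨j, hj⟩ ↦ ?_) (by positivity))
  rw [map_mul, map_mul, map_pow, map_pow, v.map_neg, map_one, one_pow, one_mul]
  have := (pow_le_pow_left₀ (v.nonneg z) hz _).trans (pow_le_pow_right₀ hM (he j hj))
  exact (mul_le_of_le_one_left (by positivity) (hv.apply_natCast_le_one)).trans this

variable {a c : ℕ}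

lemma abv_padeNumerator_le (hM : 1 ≤ M) (hz : v z ≤ M) :
    v (padeNumerator a c z) ≤ 2 ^ (4 * a + c + 1) * M ^ a := by
  refine (abv_sum_natCast_mul_pow_le (fun j hj ↦ mem_range_succ_iff.mp hj) hM hz).trans ?_
  gcongr
  exact_mod_cast (sum_padeCoeff_le (by omega)).trans_eq (by ring)

lemma abv_padeRemainder_le (hM : 1 ≤ M) (hz : v z ≤ M) :
    v (padeRemainder a c z) ≤ 2 ^ (3 * a + 2 * c + 1) * M ^ c := by
  refine (abv_sum_natCast_mul_pow_le (fun j _ ↦ Nat.sub_le c j) hM hz).trans ?_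
  gcongr
  exact_mod_cast (sum_padeCoeff_le (by omega)).trans_eq (by ring)

lemma abv_padeNumerator_le_of_isNonarchimedean (hv : IsNonarchimedean v) (hM : 1 ≤ M)
    (hz : v z ≤ M) : v (padeNumerator a c z) ≤ M ^ a :=
  abv_sum_natCast_mul_pow_le_of_isNonarchimedean hv (fun _ hj ↦ mem_range_succ_iff.mp hj) hM hz

lemma abv_padeRemainder_le_of_isNonarchimedean (hv : IsNonarchimedean v) (hM : 1 ≤ M)
    (hz : v z ≤ M) : v (padeRemainder a c z) ≤ M ^ c :=
  abv_sum_natCast_mul_pow_le_of_isNonarchimedean hv (fun j _ ↦ Nat.sub_le c j) hM hz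

end Bounds

section Heights

variable {K : Type*} [Field K] [AdmissibleAbsValues K]

lemma logHeight_padeVector_le {a c : ℕ} (hac : a ≤ c) (z : K) :
    logHeight ![padeNumerator a c z, (-1) ^ c * padeNumerator a c (1 - z), padeRemainder a c z] ≤
      c * logHeight₁ z + totalWeight K * ((3 * (a + c) + 1) * Real.log 2) := by
  set r := ![padeNumerator a c z, (-1) ^ c * padeNumerator a c (1 - z), padeRemainder a c z]
  rcases eq_or_ne r 0 with hr | hr
  · rw [hr, logHeight_zero]
    have := zero_le_logHeight₁ z
    positivity
  rw [show (3 * (a + c) + 1) * Real.log 2 = Real.log (2 ^ (3 * (a + c) + 1)) by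
    rw [Real.log_pow]; push_cast; ring]
  refine logHeight_le_mul_logHeight₁_add hr z c (by positivity) (fun v _ i ↦ ?_) fun v hv i ↦ ?_
  all_goals
    have hM : 1 ≤ max (v z) 1 := le_max_right _ _
    have hz : v z ≤ max (v z) 1 := le_max_left _ _
    have hneg (x : K) : v ((-1) ^ c * x) = v x := by
      rw [map_mul, map_pow, v.map_neg, map_one, one_pow, one_mul]
    set M := max (v z) 1
  · have hle {m n : ℕ} (hm : m ≤ 3 * (a + c) + 1) (hn : n ≤ c) :
        2 ^ m * M ^ n ≤ 2 ^ (3 * (a + c) + 1) * M ^ c := by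
      gcongr
      exact one_le_two
    fin_cases i
    · exact (abv_padeNumerator_le hM hz).trans (hle (by omega) hac)
    · refine (hneg _).trans_le <| (abv_padeNumerator_le (M := 2 * M) (by linarith) ?_).trans ?_
      · rw [sub_eq_add_neg]
        refine (v.add_le _ _).trans ?_
        rw [map_one, v.map_neg]
        linarith
      · rw [mul_pow, ← mul_assoc, ← pow_add]
        exact hle (by omega) hac
    · exact (abv_padeRemainder_le hM hz).trans (hle (by omega) le_rfl)
  · have hv := isNonarchimedean v hv
    have hpow : M ^ a ≤ M ^ c := pow_le_pow_right₀ hM hac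
    fin_cases i
    · exact (abv_padeNumerator_le_of_isNonarchimedean hv hM hz).trans hpow
    · refine (hneg _).trans_le <|
        (abv_padeNumerator_le_of_isNonarchimedean hv hM ?_).trans hpow
      rw [sub_eq_add_neg]
      exact (hv _ _).trans (max_le (by rwa [map_one]) (by rwa [v.map_neg]))
    · exact abv_padeRemainder_le_of_isNonarchimedean hv hM hz

lemma logHeight_vec_one_le (x y : K) : logHeight ![x, y, 1] ≤ logHeight₁ x + logHeight₁ y := by
  have hne (z : K) : ![z, 1] ≠ 0 := fun h ↦ one_ne_zero (congrFun h 1)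
  rw [logHeight₁_eq_logHeight, logHeight₁_eq_logHeight, ← logHeight_fun_mul_eq (hne x) (hne y)]
  refine le_of_eq_of_le ?_
    (logHeight_comp_le (![(0, 1), (1, 0), (1, 1)] : Fin 3 → Fin 2 × Fin 2) _)
  congr 1
  ext i
  fin_cases i <;> simp

lemma mul_logHeight₁_le_of_mul_pow_add_mul_pow_eq_one_of_ne {a c : ℕ} (hac : a ≤ c) {x y z : K}
    (h : x * z ^ (a + c + 1) + y * (1 - z) ^ (a + c + 1) = 1)
    (hne : padeNumerator a c z * y ≠ (-1) ^ c * padeNumerator a c (1 - z) * x) :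
    (a + 1) * logHeight₁ z ≤
      logHeight₁ x + logHeight₁ y + totalWeight K * ((3 * (a + c) + 2) * Real.log 2) := by
  set e : Fin 3 → K := ![z ^ (a + c + 1), (1 - z) ^ (a + c + 1), -1]
  have hlower : (a + c + 1) * logHeight₁ z ≤ logHeight e := by
    have hcomp := logHeight_comp_le ![0, 2] e
    have hpow : e ∘ ![0, 2] = ![z ^ (a + c + 1), -1] := by
      ext i
      fin_cases i <;> rfl
    rw [hpow, ← logHeight₁_div_eq_logHeight, div_neg, div_one, logHeight₁_neg,
      logHeight₁_pow] at hcomp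
    exact_mod_cast hcomp
  have hupper := logHeight_le_of_dotProduct_eq_zero (e := e) (r' := ![x, y, 1])
    (r := ![padeNumerator a c z, (-1) ^ c * padeNumerator a c (1 - z), padeRemainder a c z])
    (by simp [e, ← pade_identity]; ring)
    (by simp [e]; linear_combination h)
    fun hcross ↦ hne (by simpa [cross_apply, sub_eq_zero] using congrFun hcross 2)
  have := logHeight_padeVector_le hac z
  have := logHeight_vec_one_le x y
  linarith

/-- Two consecutive Padé approximations cannot both be proportional to the given equation. -/
lemma mul_logHeight₁_le_of_mul_pow_add_mul_pow_eq_one [CharZero K] (k : ℕ) {x y z : K} (hy : y ≠ 0)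
    (h : x * z ^ (2 * k + 3) + y * (1 - z) ^ (2 * k + 3) = 1) :
    (k + 1) * logHeight₁ z ≤
      logHeight₁ x + logHeight₁ y + totalWeight K * ((6 * k + 8) * Real.log 2) := by
  by_cases hne : padeNumerator k (k + 2) z * y =
      (-1) ^ (k + 2) * padeNumerator k (k + 2) (1 - z) * x
  · have hne' : padeNumerator (k + 1) (k + 1) z * y ≠
        (-1) ^ (k + 1) * padeNumerator (k + 1) (k + 1) (1 - z) * x := fun heq ↦
      mul_ne_zero hy (padeNumerator_det_ne_zero k z) <| by
        linear_combination ((-1) ^ (k + 2) * padeNumerator k (k + 2) (1 - z)) * heq -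
          ((-1) ^ (k + 1) * padeNumerator (k + 1) (k + 1) (1 - z)) * hne
    have := mul_logHeight₁_le_of_mul_pow_add_mul_pow_eq_one_of_ne le_rfl
      (by convert h using 3 <;> ring) hne'
    have := zero_le_logHeight₁ z
    push_cast at *
    linarith
  · have := mul_logHeight₁_le_of_mul_pow_add_mul_pow_eq_one_of_ne (by omega)
      (by convert h using 3 <;> ring) hne
    push_cast at *
    linarith

end Heights

end PadeApproximation

section SolutionPairs

open Height AdmissibleAbsValues Matrix Real

variable {K : Type*} [Field K] {c : K} {p p' p'' : K × K}

lemma prod_eq_of_fst_eq (hc : c ≠ 0) (hp : (1 - p.1) * (1 - p.2) = c)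
    (hp' : (1 - p'.1) * (1 - p'.2) = c) (h : p.1 = p'.1) : p = p' := by
  have hne : 1 - p.1 ≠ 0 := left_ne_zero_of_mul (hp.trans_ne hc)
  rw [← hp, ← h] at hp'
  exact Prod.ext h (sub_right_injective (mul_left_cancel₀ hne hp')).symm

lemma prod_eq_of_snd_eq (hc : c ≠ 0) (hp : (1 - p.1) * (1 - p.2) = c)
    (hp' : (1 - p'.1) * (1 - p'.2) = c) (h : p.2 = p'.2) : p = p' := by
  have hne : 1 - p.2 ≠ 0 := right_ne_zero_of_mul (hp.trans_ne hc)
  rw [← hp, ← h] at hp'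
  exact Prod.ext (sub_right_injective (mul_right_cancel₀ hne hp')).symm h

variable [AdmissibleAbsValues K]

lemma logHeight_vec_one_sub_mul_le (x y : K) : logHeight ![x - 1, y - 1, 1 - x * y] ≤
    logHeight₁ x + logHeight₁ y + totalWeight K * log 2 := by
  have hne (z : K) : ![z, 1] ≠ 0 := fun h ↦ one_ne_zero (congrFun h 1)
  rw [logHeight₁_eq_logHeight, logHeight₁_eq_logHeight, ← logHeight_fun_mul_eq (hne x) (hne y)]
  refine le_trans (le_of_eq ?_) (logHeight_sub_comp_le
    (fun a : Fin 2 × Fin 2 ↦ ![x, 1] a.1 * ![y, 1] a.2) ![(0, 1), (1, 0), (1, 1)]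
    ![(1, 1), (1, 1), (0, 0)])
  congr 1
  ext i
  fin_cases i <;> simp

lemma max_logHeight₁_le_logHeight_vec {u w : K} (hu : u ≠ 0) (hw : w ≠ 0) :
    max (logHeight₁ u) (logHeight₁ w) ≤ logHeight ![u, w, u * w] := by
  refine max_le ?_ ?_
  · have hle := logHeight_comp_le ![2, 1] ![u, w, u * w]
    rwa [show ![u, w, u * w] ∘ ![2, 1] = ![u * w, w] by ext i; fin_cases i <;> rfl,
      ← logHeight₁_div_eq_logHeight, mul_div_cancel_right₀ _ hw] at hle
  · have hle := logHeight_comp_le ![2, 0] ![u, w, u * w]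
    rwa [show ![u, w, u * w] ∘ ![2, 0] = ![u * w, u] by ext i; fin_cases i <;> rfl,
      ← logHeight₁_div_eq_logHeight, mul_div_cancel_left₀ _ hu] at hle

/-- The gap principle: `(u, w, u * w)` is orthogonal to `(x - 1, y - 1, 1 - x * y)` whenever
`(u, w)` and `(u * x, w * y)` are both solutions, so two such relations determine it up to
scaling. -/
lemma max_logHeight₁_le_of_three_solutions (hc : c ≠ 0) (hp : (1 - p.1) * (1 - p.2) = c)
    (hp' : (1 - p'.1) * (1 - p'.2) = c) (hp'' : (1 - p''.1) * (1 - p''.2) = c) (hfst : p.1 ≠ 0)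
    (hsnd : p.2 ≠ 0) (h' : p ≠ p') (h'' : p ≠ p'') (hne : p' ≠ p'') :
    max (logHeight₁ p.1) (logHeight₁ p.2) ≤
      logHeight₁ (p'.1 / p.1) + logHeight₁ (p'.2 / p.2) +
        (logHeight₁ (p''.1 / p.1) + logHeight₁ (p''.2 / p.2)) + 3 * (totalWeight K * log 2) := by
  have horth {q : K × K} (hq : (1 - q.1) * (1 - q.2) = c) : ![p.1, p.2, p.1 * p.2] ⬝ᵥ
      ![q.1 / p.1 - 1, q.2 / p.2 - 1, 1 - q.1 / p.1 * (q.2 / p.2)] = 0 := by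
    simp only [vec3_dotProduct, cons_val]
    field_simp
    linear_combination hp - hq
  have hfst_ne {q : K × K} (hq : (1 - q.1) * (1 - q.2) = c) (hpq : p ≠ q) : q.1 / p.1 - 1 ≠ 0 :=
    sub_ne_zero.mpr fun h ↦ hpq (prod_eq_of_fst_eq hc hp hq ((div_eq_one_iff_eq hfst).mp h).symm)
  have hsnd_ne : p''.2 / p.2 - p'.2 / p.2 ≠ 0 :=
    sub_ne_zero.mpr fun h ↦ hne (prod_eq_of_snd_eq hc hp' hp'' ((div_left_inj' hsnd).mp h).symm)
  have hcross : ![p'.1 / p.1 - 1, p'.2 / p.2 - 1, 1 - p'.1 / p.1 * (p'.2 / p.2)] ⨯₃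
      ![p''.1 / p.1 - 1, p''.2 / p.2 - 1, 1 - p''.1 / p.1 * (p''.2 / p.2)] ≠ 0 := by
    intro h
    have h1 := congrFun h 1
    have h2 := congrFun h 2
    simp only [cross_apply, cons_val, Pi.zero_apply] at h1 h2
    refine mul_ne_zero (mul_ne_zero (hfst_ne hp' h') (hfst_ne hp'' h'')) hsnd_ne ?_
    linear_combination h1 - h2
  have hheight := logHeight_le_of_dotProduct_eq_zero (horth hp') (horth hp'') hcross
  have h1 := logHeight_vec_one_sub_mul_le (p'.1 / p.1) (p'.2 / p.2)
  have h2 := logHeight_vec_one_sub_mul_le (p''.1 / p.1) (p''.2 / p.2)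
  linarith [max_logHeight₁_le_logHeight_vec hfst hsnd]

lemma logHeight₁_snd_le (hc : c ≠ 0) (hp : (1 - p.1) * (1 - p.2) = c) :
    logHeight₁ p.2 ≤ logHeight₁ c + logHeight₁ p.1 + 2 * (totalWeight K * log 2) := by
  have hne : 1 - p.1 ≠ 0 := left_ne_zero_of_mul (hp.trans_ne hc)
  have hdiv := logHeight₁_div_le c (1 - p.1)
  rw [← hp, mul_div_cancel_left₀ _ hne, hp] at hdiv
  have hsnd := logHeight₁_one_sub_le (1 - p.2)
  rw [sub_sub_cancel] at hsnd
  linarith [logHeight₁_one_sub_le p.1]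

lemma logHeight₁_le_add_of_one_sub_mul_one_sub_eq (hp : (1 - p.1) * (1 - p.2) = c) :
    logHeight₁ c ≤ logHeight₁ p.1 + logHeight₁ p.2 + 2 * (totalWeight K * log 2) := by
  have hmul := logHeight₁_mul_le (1 - p.1) (1 - p.2)
  rw [hp] at hmul
  linarith [logHeight₁_one_sub_le p.1, logHeight₁_one_sub_le p.2]

end SolutionPairs

section TwistedUnits

open Height Real NumberField.HeightOneSpectrum

variable {K : Type*} [Field K] [NumberField K]

lemma one_le_totalWeight : (1 : ℝ) ≤ totalWeight K := by
  rw [totalWeight_eq_sum_mult]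
  have hle : InfinitePlace.mult (Classical.arbitrary (InfinitePlace K)) ≤
      ∑ v : InfinitePlace K, v.mult :=
    Finset.single_le_sum (fun _ _ ↦ Nat.zero_le _) (Finset.mem_univ _)
  exact_mod_cast InfinitePlace.mult_pos.trans_le hle

lemma totalWeight_le : (totalWeight K : ℝ) ≤ 2 * Fintype.card (InfinitePlace K) := by
  rw [totalWeight_eq_sum_mult]
  have hle : ∑ v : InfinitePlace K, v.mult ≤ ∑ _v : InfinitePlace K, 2 :=
    Finset.sum_le_sum fun v _ ↦ by rw [InfinitePlace.mult]; split_ifs <;> omega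
  rw [Finset.sum_const, smul_eq_mul, mul_comm] at hle
  exact_mod_cast hle

lemma totalWeight_mul_log_two_le : totalWeight K * log 2 ≤ 0.7 * totalWeight K := by
  rw [mul_comm]
  gcongr
  linarith [log_two_lt_d9]

section SmallHeight

lemma norm_embedding_sub_one_le {x y : K} (hx : x ≠ 0) (hy : y ≠ 0) {t : ℝ} (ht : 0 ≤ t)
    (v : InfinitePlace K)
    (hre : |(Complex.log (v.embedding x)).re - (Complex.log (v.embedding y)).re| ≤ exp (-t - 2))
    (him : |(Complex.log (v.embedding x)).im - (Complex.log (v.embedding y)).im| ≤ exp (-t - 2)) :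
    v (x / y - 1) ≤ exp (-t) := by
  set δ := Complex.log (v.embedding x) - Complex.log (v.embedding y) with hδ
  have hembedding : v.embedding (x / y - 1) = Complex.exp δ - 1 := by
    rw [hδ, Complex.exp_sub, Complex.exp_log (by simpa using hx),
      Complex.exp_log (by simpa using hy)]
    simp
  have hδ_le : 2 * ‖δ‖ ≤ exp (-t) := by
    have hexp : 4 * exp (-t - 2) ≤ exp (-t) := by
      rw [show -t = 2 + (-t - 2) by ring, exp_add, show (2 : ℝ) + (-t - 2) - 2 = -t - 2 by ring]
      gcongr
      rw [show (2 : ℝ) = 1 + 1 by norm_num, exp_add]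
      nlinarith [add_one_le_exp (1 : ℝ)]
    have hnorm := Complex.norm_le_abs_re_add_abs_im δ
    rw [hδ, Complex.sub_re, Complex.sub_im] at hnorm
    linarith
  have hexp_le : exp (-t) ≤ 1 := exp_le_one_iff.mpr (by linarith)
  rw [← InfinitePlace.norm_embedding_eq, hembedding]
  exact (Complex.norm_exp_sub_one_le (by linarith [norm_nonneg δ])).trans hδ_le

lemma eq_of_abs_log_embedding_sub_le {x y : K} (hx : x ≠ 0) (hy : y ≠ 0) {t : ℝ} (ht : 0 ≤ t)
    (hheight : logHeight₁ x + logHeight₁ y < t * totalWeight K)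
    (hre : ∀ v : InfinitePlace K,
      |(Complex.log (v.embedding x)).re - (Complex.log (v.embedding y)).re| ≤ exp (-t - 2))
    (him : ∀ v : InfinitePlace K,
      |(Complex.log (v.embedding x)).im - (Complex.log (v.embedding y)).im| ≤ exp (-t - 2)) :
    x = y := by
  by_contra hne
  have hlow := mul_totalWeight_le_logHeight₁ (x := x / y) (t := t)
    (fun h ↦ hne ((div_eq_one_iff_eq hy).mp h)) fun v hv ↦ by
      have hv : IsInfinitePlace v := mem_multisetInfinitePlace.mp hv
      exact norm_embedding_sub_one_le hx hy ht ⟨v, hv⟩ (hre _) (him _)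
  linarith [logHeight₁_div_le x y]

lemma sum_abs_log_embedding_le (x : K) :
    ∑ v : InfinitePlace K, |(Complex.log (v.embedding x)).re| +
      ∑ v : InfinitePlace K, |(Complex.log (v.embedding x)).im| ≤
        2 * logHeight₁ x + 4 * Fintype.card (InfinitePlace K) := by
  have hlog := sum_abs_placeLog_le ∅ x
  rw [sum_abs_placeLog, Finset.sum_empty, add_zero] at hlog
  have hre (v : InfinitePlace K) :
      |(Complex.log (v.embedding x)).re| ≤ v.mult * |log (v x)| := by
    rw [Complex.log_re, InfinitePlace.norm_embedding_eq]
    exact le_mul_of_one_le_left (abs_nonneg _) (by exact_mod_cast InfinitePlace.one_le_mult)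
  have him (v : InfinitePlace K) : |(Complex.log (v.embedding x)).im| ≤ 4 := by
    rw [Complex.log_im]
    exact (Complex.abs_arg_le_pi _).trans pi_le_four
  refine add_le_add ((Finset.sum_le_sum fun v _ ↦ hre v).trans hlog) ?_
  simpa [mul_comm] using Finset.sum_le_card_nsmul Finset.univ _ 4 fun v _ ↦ him v

lemma card_le_of_logHeight₁_le (E : Finset K) (h0 : ∀ x ∈ E, x ≠ 0)
    (hE : ∀ x ∈ E, logHeight₁ x ≤ 5 * totalWeight K) :
    (E.card : ℝ) ≤
      (exp 1 * (24 / exp (-13) + 3)) ^ (2 * Fintype.card (InfinitePlace K)) := by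
  have hcard : (0 : ℝ) < Fintype.card (InfinitePlace K) := by exact_mod_cast Fintype.card_pos
  have hD := one_le_totalWeight (K := K)
  have hcount := card_le_mul_pow_of_card_le_of_abs_sub_le_pair E
    (fun x (v : InfinitePlace K) ↦ (Complex.log (v.embedding x)).re)
    (fun x v ↦ (Complex.log (v.embedding x)).im) (L := 24 * Fintype.card (InfinitePlace K))
    (δ := exp (-13) * Fintype.card (InfinitePlace K)) (B := 1) (by positivity) (by positivity)
    zero_le_one (fun x hx ↦ ?_) fun F hF hre him ↦ ?_
  · rwa [mul_div_mul_right _ _ hcard.ne', one_mul] at hcount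
  · linarith [sum_abs_log_embedding_le x, hE x hx, totalWeight_le (K := K)]
  · have hsub : F.card ≤ 1 := Finset.card_le_one.mpr fun x hx y hy ↦ by
      simp only [mul_div_cancel_right₀ _ hcard.ne'] at hre him
      refine eq_of_abs_log_embedding_sub_le (t := 11) (h0 x (hF hx)) (h0 y (hF hy)) (by norm_num)
        (by linarith [hE x (hF hx), hE y (hF hy)]) (fun v ↦ ?_) fun v ↦ ?_
      · exact (hre x hx y hy v).trans_eq (by norm_num)
      · exact (him x hx y hy v).trans_eq (by norm_num)
    exact_mod_cast hsub

end SmallHeight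

section Quotients

variable {T : Finset (HeightOneSpectrum (𝓞 K))} {x y : K}

lemma placeLog_div_pow (hx : x ≠ 0) (hy : y ≠ 0) (n : ℕ) (i : InfinitePlace K ⊕ T) :
    placeLog T (x / y ^ n) i = placeLog T x i - n * placeLog T y i := by
  have hlog (v : AbsoluteValue K ℝ) : log (v (x / y ^ n)) = log (v x) - n * log (v y) := by
    rw [map_div₀, map_pow, log_div (v.ne_zero hx) (pow_ne_zero _ (v.ne_zero hy)), log_pow]
  rcases i with v | q
  · exact (congrArg (fun t : ℝ ↦ v.mult * t) (hlog v.1)).trans (by rw [mul_sub, mul_left_comm]; rfl)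
  · exact hlog (adicAbv K q.1)

lemma logHeight₁_div_le_of_abs_placeLog_sub_le (hx : x ≠ 0) (hy : y ≠ 0)
    (hT : ∀ q ∉ T, adicAbv K q x = adicAbv K q y) {δ : ℝ}
    (h : ∀ i, |placeLog T x i - placeLog T y i| ≤ δ / Fintype.card (InfinitePlace K ⊕ T)) :
    logHeight₁ (x / y) ≤ δ := by
  have hheight := logHeight₁_le_sum_abs_placeLog_add T (x := x / y) (c := 1) (n := 0) fun q hq ↦ by
    rw [map_div₀, hT q hq, pow_zero]
    exact div_self_le_one _
  have hlog (i) : placeLog T (x / y) i = placeLog T x i - placeLog T y i := by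
    simpa using placeLog_div_pow hx hy 1 i
  have hsum := Finset.sum_le_card_nsmul Finset.univ _ _ fun i _ ↦ h i
  rw [Finset.card_univ, nsmul_eq_mul,
    mul_div_cancel₀ _ (Nat.cast_ne_zero.mpr Fintype.card_ne_zero)] at hsum
  simp only [hlog, Nat.cast_zero, zero_mul, add_zero] at hheight
  exact hheight.trans hsum

lemma sum_abs_sub_mul_le_of_abs_div_sub_div_le {ι : Type*} [Fintype ι] [Nonempty ι]
    {a b : ι → ℝ} {A B n δ : ℝ}
    (hA : 0 < A) (hB : 0 < B) (hn : n * A ≤ B) (hn' : B ≤ (n + 2) * A)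
    (h : ∀ i, |b i / B - a i / A| ≤ δ / Fintype.card ι) :
    ∑ i, |b i - n * a i| ≤ δ * B + 2 * ∑ i, |a i| := by
  have hi (i : ι) : |b i - n * a i| ≤ B * (δ / Fintype.card ι) + 2 * |a i| :=
    calc |b i - n * a i| = |B * (b i / B - a i / A) + (B / A - n) * a i| := by
          congr 1
          field_simp
          ring
      _ ≤ B * |b i / B - a i / A| + (B / A - n) * |a i| := by
          refine (abs_add_le _ _).trans_eq ?_
          rw [abs_mul, abs_mul, abs_of_pos hB,
            abs_of_nonneg (sub_nonneg.mpr ((le_div_iff₀ hA).mpr hn))]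
      _ ≤ B * (δ / Fintype.card ι) + 2 * |a i| := by
          gcongr
          · exact h i
          · linarith [(div_le_iff₀ hA).mpr hn']
  refine (Finset.sum_le_sum fun i _ ↦ hi i).trans ?_
  rw [Finset.sum_add_distrib, ← Finset.mul_sum _ _ (2 : ℝ), Finset.sum_const, Finset.card_univ,
    nsmul_eq_mul]
  field_simp
  rfl

lemma logHeight₁_div_pow_le (hx : x ≠ 0) (hy : y ≠ 0) {c : K} {n : ℕ} {A B δ : ℝ} (hA : 0 < A)
    (hB : 0 < B) (hn : n * A ≤ B) (hn' : B ≤ (n + 2) * A)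
    (h : ∀ i, |placeLog T x i / B - placeLog T y i / A| ≤
      δ / Fintype.card (InfinitePlace K ⊕ T))
    (hT : ∀ q ∉ T, adicAbv K q (x / y ^ n) ≤ max (adicAbv K q c) 1 ^ n) :
    logHeight₁ (x / y ^ n) ≤ δ * B + 4 * logHeight₁ y + n * logHeight₁ c := by
  have hheight := logHeight₁_le_sum_abs_placeLog_add T hT
  simp only [placeLog_div_pow hx hy] at hheight
  linarith [sum_abs_sub_mul_le_of_abs_div_sub_div_le hA hB hn hn' h, sum_abs_placeLog_le T y]

end Quotients

/-- The pairs `(x, y)` with `(1 - x) * (1 - y) = c` for which `x` is a `T`-unit and `y` is a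
`T`-integer with the absolute values `r q` outside `T`. Prescribing them makes the quotient of the
second coordinates of two solutions a `T`-unit, although these coordinates need not be `T`-units. -/
structure UnitSolution (T : Finset (HeightOneSpectrum (𝓞 K))) (c : K)
    (r : HeightOneSpectrum (𝓞 K) → ℝ) (p : K × K) : Prop where
  fst_ne_zero : p.1 ≠ 0
  snd_ne_zero : p.2 ≠ 0
  one_sub_mul_one_sub : (1 - p.1) * (1 - p.2) = c
  adicAbv_fst : ∀ q ∉ T, adicAbv K q p.1 = 1
  adicAbv_snd : ∀ q ∉ T, adicAbv K q p.2 = r q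
  adicAbv_snd_le_one : ∀ q ∉ T, adicAbv K q p.2 ≤ 1

variable {T : Finset (HeightOneSpectrum (𝓞 K))} {c : K} {r : HeightOneSpectrum (𝓞 K) → ℝ}

section Window

lemma card_le_two_of_abs_placeLog_sub_le (hc : c ≠ 0) {F : Finset (K × K)}
    (hF : ∀ p ∈ F, UnitSolution T c r p) {X : ℝ} (hX : 5 * totalWeight K ≤ X)
    (hlow : ∀ p ∈ F, X ≤ max (logHeight₁ p.1) (logHeight₁ p.2))
    (hfst : ∀ p ∈ F, ∀ p' ∈ F, ∀ i, |placeLog T p.1 i - placeLog T p'.1 i| ≤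
      X / 8 / Fintype.card (InfinitePlace K ⊕ T))
    (hsnd : ∀ p ∈ F, ∀ p' ∈ F, ∀ i, |placeLog T p.2 i - placeLog T p'.2 i| ≤
      X / 8 / Fintype.card (InfinitePlace K ⊕ T)) : F.card ≤ 2 := by
  by_contra! hcard
  obtain ⟨p, p', p'', hp, hp', hp'', hne, hne', hne''⟩ := Finset.two_lt_card_iff.mp hcard
  have hquot : ∀ q ∈ F, logHeight₁ (q.1 / p.1) ≤ X / 8 ∧ logHeight₁ (q.2 / p.2) ≤ X / 8 :=
    fun q hq ↦ ⟨logHeight₁_div_le_of_abs_placeLog_sub_le (hF q hq).fst_ne_zero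
      (hF p hp).fst_ne_zero (fun v hv ↦ ((hF q hq).adicAbv_fst v hv).trans
        ((hF p hp).adicAbv_fst v hv).symm) (hfst q hq p hp),
      logHeight₁_div_le_of_abs_placeLog_sub_le (hF q hq).snd_ne_zero
      (hF p hp).snd_ne_zero (fun v hv ↦ ((hF q hq).adicAbv_snd v hv).trans
        ((hF p hp).adicAbv_snd v hv).symm) (hsnd q hq p hp)⟩
  have hgap := max_logHeight₁_le_of_three_solutions hc (hF p hp).one_sub_mul_one_sub
    (hF p' hp').one_sub_mul_one_sub (hF p'' hp'').one_sub_mul_one_sub (hF p hp).fst_ne_zero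
    (hF p hp).snd_ne_zero hne hne' hne''
  linarith [hlow p hp, hquot p' hp', hquot p'' hp'', totalWeight_mul_log_two_le (K := K),
    one_le_totalWeight (K := K)]

lemma card_le_of_max_logHeight₁_mem_Icc (hc : c ≠ 0) {E : Finset (K × K)}
    (hE : ∀ p ∈ E, UnitSolution T c r p) {X Λ : ℝ} (hX : 5 * totalWeight K ≤ X) (hΛ : 0 ≤ Λ)
    (hmem : ∀ p ∈ E, max (logHeight₁ p.1) (logHeight₁ p.2) ∈ Set.Icc X (Λ * X)) :
    (E.card : ℝ) ≤
      2 * (exp 1 * (32 * Λ + 3)) ^ (2 * Fintype.card (InfinitePlace K ⊕ T)) := by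
  have hX0 : 0 < X := by linarith [one_le_totalWeight (K := K)]
  have hcount := card_le_mul_pow_of_card_le_of_abs_sub_le_pair E (fun p ↦ placeLog T p.1)
    (fun p ↦ placeLog T p.2) (L := 4 * Λ * X) (δ := X / 8) (B := 2) (by positivity)
    (by positivity) zero_le_two (fun p hp ↦ ?_) fun F hF hfst hsnd ↦ ?_
  · convert hcount using 4
    field_simp
    ring
  · linarith [sum_abs_placeLog_le T p.1, sum_abs_placeLog_le T p.2,
      max_le_iff.mp (hmem p hp).2]
  · exact_mod_cast card_le_two_of_abs_placeLog_sub_le hc (fun p hp ↦ hE p (hF hp)) hX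
      (fun p hp ↦ (hmem p (hF hp)).1) hfst hsnd

end Window

section LargeHeight

lemma UnitSolution.one_sub_fst_ne_zero {p : K × K} (hp : UnitSolution T c r p) (hc : c ≠ 0) :
    1 - p.1 ≠ 0 :=
  left_ne_zero_of_mul (hp.one_sub_mul_one_sub.trans_ne hc)

lemma adicAbv_one_sub_le_one {q : HeightOneSpectrum (𝓞 K)} {x : K} (hx : adicAbv K q x ≤ 1) :
    adicAbv K q (1 - x) ≤ 1 := by
  rw [sub_eq_add_neg]
  refine (isNonarchimedean_adicAbv K q 1 (-x)).trans (max_le (map_one _).le ?_)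
  rwa [AbsoluteValue.map_neg]

lemma UnitSolution.adicAbv_le_adicAbv_one_sub_fst {p : K × K} (hp : UnitSolution T c r p)
    {q : HeightOneSpectrum (𝓞 K)} (hq : q ∉ T) : adicAbv K q c ≤ adicAbv K q (1 - p.1) := by
  rw [← hp.one_sub_mul_one_sub, map_mul]
  exact mul_le_of_le_one_right (apply_nonneg _ _)
    (adicAbv_one_sub_le_one (hp.adicAbv_snd_le_one q hq))

lemma exists_nat_mul_le_and_le_mul {A B : ℝ} (hA : 0 < A) {m : ℕ} (h : (2 * m + 3) * A ≤ B) :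
    ∃ k : ℕ, m ≤ k ∧ (2 * k + 3) * A ≤ B ∧ B ≤ (2 * k + 5) * A := by
  rw [← le_div_iff₀ hA] at h
  have hm : (m : ℝ) ≤ (B / A - 3) / 2 := by linarith
  refine ⟨⌊(B / A - 3) / 2⌋₊, Nat.le_floor hm, ?_, ?_⟩
  · rw [← le_div_iff₀ hA]
    linarith [Nat.floor_le (m.cast_nonneg.trans hm)]
  · rw [← div_le_iff₀ hA]
    linarith [Nat.lt_floor_add_one ((B / A - 3) / 2)]

/-- If the logarithm vectors of two solutions point in nearly the same direction, then
`X = p'.1 / p.1 ^ n` and `Y = (1 - p'.1) / (1 - p.1) ^ n` have small height for a suitable exponent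
`n`, while `X * p.1 ^ n + Y * (1 - p.1) ^ n = 1`: this contradicts the Padé bound unless the heights
are comparable. -/
lemma logHeight₁_le_mul_of_abs_div_sub_div_le (hc : c ≠ 0) {p p' : K × K}
    (hp : UnitSolution T c r p) (hp' : UnitSolution T c r p')
    (hD : 100 * totalWeight K ≤ logHeight₁ p.1) (hcp : 100 * logHeight₁ c ≤ logHeight₁ p.1)
    (hfst : ∀ i, |placeLog T p'.1 i / logHeight₁ p'.1 - placeLog T p.1 i / logHeight₁ p.1| ≤
      1 / 20 / Fintype.card (InfinitePlace K ⊕ T))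
    (hone_sub : ∀ i, |placeLog T (1 - p'.1) i / logHeight₁ p'.1 -
      placeLog T (1 - p.1) i / logHeight₁ p.1| ≤ 1 / 20 / Fintype.card (InfinitePlace K ⊕ T)) :
    logHeight₁ p'.1 ≤ 25 * logHeight₁ p.1 := by
  by_contra! hlt
  have hA : 0 < logHeight₁ p.1 := by linarith [one_le_totalWeight (K := K)]
  have hB : 0 < logHeight₁ p'.1 := by linarith
  obtain ⟨k, hk, hkA, hkB⟩ := exists_nat_mul_le_and_le_mul hA (m := 11) (B := logHeight₁ p'.1)
    (by push_cast; linarith)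
  have hn : ((2 * k + 3 : ℕ) : ℝ) = 2 * k + 3 := by push_cast; rfl
  have hX : logHeight₁ (p'.1 / p.1 ^ (2 * k + 3)) ≤ _ :=
    logHeight₁_div_pow_le (c := 1) hp'.fst_ne_zero hp.fst_ne_zero hA hB (by rwa [hn])
      (by rw [hn]; linarith) hfst fun q hq ↦ by
        simp [hp.adicAbv_fst q hq, hp'.adicAbv_fst q hq]
  have hY : logHeight₁ ((1 - p'.1) / (1 - p.1) ^ (2 * k + 3)) ≤ _ :=
    logHeight₁_div_pow_le (c := c⁻¹) (hp'.one_sub_fst_ne_zero hc) (hp.one_sub_fst_ne_zero hc)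
      hA hB (by rwa [hn]) (by rw [hn]; linarith) hone_sub fun q hq ↦ by
        have hc_pos := (adicAbv K q).pos hc
        rw [map_div₀, map_pow, map_inv₀]
        grw [adicAbv_one_sub_le_one (hp'.adicAbv_fst q hq).le,
          ← hp.adicAbv_le_adicAbv_one_sub_fst hq, one_div, ← inv_pow, ← le_max_left]
  have hpade := mul_logHeight₁_le_of_mul_pow_add_mul_pow_eq_one k (z := p.1)
    (div_ne_zero (hp'.one_sub_fst_ne_zero hc) (pow_ne_zero _ (hp.one_sub_fst_ne_zero hc)))
    (by rw [div_mul_cancel₀ _ (pow_ne_zero _ hp.fst_ne_zero),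
          div_mul_cancel₀ _ (pow_ne_zero _ (hp.one_sub_fst_ne_zero hc)), add_sub_cancel])
  rw [logHeight₁_one, mul_zero, add_zero] at hX
  rw [logHeight₁_inv, hn] at hY
  have hlog : totalWeight K * log 2 ≤ 0.007 * logHeight₁ p.1 := by
    linarith [totalWeight_mul_log_two_le (K := K)]
  have hlog_k := mul_le_mul_of_nonneg_left hlog (show (0 : ℝ) ≤ 6 * k + 8 by positivity)
  have hcp_k := mul_le_mul_of_nonneg_left hcp (show (0 : ℝ) ≤ 2 * k + 3 by positivity)
  have hk_A := mul_le_mul_of_nonneg_right (show (11 : ℝ) ≤ k by exact_mod_cast hk) hA.le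
  linarith [logHeight₁_one_sub_le p.1]

lemma card_le_of_le_logHeight₁_fst (hc : c ≠ 0) {E : Finset (K × K)}
    (hE : ∀ p ∈ E, UnitSolution T c r p) (hD : ∀ p ∈ E, 100 * totalWeight K ≤ logHeight₁ p.1)
    (hcE : ∀ p ∈ E, 100 * logHeight₁ c ≤ logHeight₁ p.1) :
    (E.card : ℝ) ≤ 2 * (exp 1 * 835) ^ (2 * Fintype.card (InfinitePlace K ⊕ T)) *
      (exp 1 * 103) ^ (2 * Fintype.card (InfinitePlace K ⊕ T)) := by
  have hlog := totalWeight_mul_log_two_le (K := K)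
  have hone := one_le_totalWeight (K := K)
  have hcount := card_le_mul_pow_of_card_le_of_abs_sub_le_pair E
    (fun p i ↦ placeLog T p.1 i / logHeight₁ p.1)
    (fun p i ↦ placeLog T (1 - p.1) i / logHeight₁ p.1) (L := 5) (δ := 1 / 20)
    (B := 2 * (exp 1 * 835) ^ (2 * Fintype.card (InfinitePlace K ⊕ T))) (by positivity)
    (by positivity) (by positivity) (fun p hp ↦ ?_) fun F hF hfst hone_sub ↦ ?_
  · exact hcount.trans_eq (by norm_num)
  · have hpos : 0 < logHeight₁ p.1 := by linarith [hD p hp]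
    simp only [abs_div, abs_of_pos hpos]
    rw [← Finset.sum_div, ← Finset.sum_div, ← add_div, div_le_iff₀ hpos]
    linarith [sum_abs_placeLog_le T p.1, sum_abs_placeLog_le T (1 - p.1),
      logHeight₁_one_sub_le p.1, hD p hp]
  · rcases F.eq_empty_or_nonempty with rfl | hne
    · rw [Finset.card_empty, Nat.cast_zero]
      positivity
    obtain ⟨p, hp, hmin⟩ := F.exists_min_image (fun p ↦ logHeight₁ p.1) hne
    refine (card_le_of_max_logHeight₁_mem_Icc (X := logHeight₁ p.1) (Λ := 26) hc
      (fun p' hp' ↦ hE p' (hF hp')) (by linarith [hD p (hF hp)]) (by norm_num)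
      fun p' hp' ↦ ⟨(hmin p' hp').trans (le_max_left _ _), ?_⟩).trans_eq (by norm_num)
    have hle := logHeight₁_le_mul_of_abs_div_sub_div_le hc (hE p (hF hp)) (hE p' (hF hp'))
      (hD p (hF hp)) (hcE p (hF hp)) (hfst p' hp' p hp) (hone_sub p' hp' p hp)
    have hsnd := logHeight₁_snd_le hc (hE p' (hF hp')).one_sub_mul_one_sub
    apply max_le <;> linarith [hD p (hF hp), hcE p (hF hp)]

end LargeHeight

section Count

lemma two_pow_le_exp (n : ℕ) : (2 : ℝ) ^ n ≤ exp n := by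
  rw [← exp_one_pow]
  gcongr
  linarith [add_one_le_exp (1 : ℝ)]

lemma exp_one_mul_pow_le {a t : ℝ} (ha : 0 ≤ a) (hat : a ≤ exp t) (n : ℕ) :
    (exp 1 * a) ^ n ≤ exp (n * (1 + t)) := by
  rw [exp_nat_mul, exp_add]
  gcongr

lemma card_le_exp_of_logHeight₁_fst_le (hc : c ≠ 0) {E : Finset (K × K)}
    (hE : ∀ p ∈ E, UnitSolution T c r p) (hD : ∀ p ∈ E, logHeight₁ p.1 ≤ 5 * totalWeight K) :
    (E.card : ℝ) ≤ exp (38 * Fintype.card (InfinitePlace K ⊕ T)) := by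
  have hinj : Set.InjOn Prod.fst (E : Set (K × K)) := fun p hp p' hp' ↦
    prod_eq_of_fst_eq hc (hE p hp).one_sub_mul_one_sub (hE p' hp').one_sub_mul_one_sub
  have hbase : 24 / exp (-13) + 3 ≤ exp 18 := by
    have h5 := two_pow_le_exp 5
    have h13 : 1 ≤ exp 13 := one_le_exp (by norm_num)
    rw [exp_neg, div_inv_eq_mul, show (18 : ℝ) = (5 : ℕ) + 13 by norm_num, exp_add]
    nlinarith
  rw [← Finset.card_image_of_injOn hinj]
  calc ((E.image Prod.fst).card : ℝ)
      ≤ (exp 1 * (24 / exp (-13) + 3)) ^ (2 * Fintype.card (InfinitePlace K)) :=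
        card_le_of_logHeight₁_le _ (Finset.forall_mem_image.mpr fun p hp ↦ (hE p hp).fst_ne_zero)
          (Finset.forall_mem_image.mpr hD)
    _ ≤ exp (((2 * Fintype.card (InfinitePlace K) : ℕ) : ℝ) * (1 + 18)) :=
        exp_one_mul_pow_le (by positivity) hbase _
    _ ≤ exp (38 * Fintype.card (InfinitePlace K ⊕ T)) := by
        rw [Fintype.card_sum]
        push_cast
        refine exp_le_exp.mpr ?_
        linarith [(Fintype.card T).cast_nonneg (α := ℝ)]

lemma card_le_exp_of_logHeight₁_fst_mem_Icc (hc : c ≠ 0) {E : Finset (K × K)}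
    (hE : ∀ p ∈ E, UnitSolution T c r p)
    (hmem : ∀ p ∈ E, logHeight₁ p.1 ∈
      Set.Icc (5 * totalWeight K : ℝ) (100 * max (totalWeight K : ℝ) (logHeight₁ c))) :
    (E.card : ℝ) ≤ 2 * exp (38 * Fintype.card (InfinitePlace K ⊕ T)) := by
  have hlog := totalWeight_mul_log_two_le (K := K)
  set X : ℝ := max (5 * totalWeight K) (logHeight₁ c / 3)
  have hDX : 5 * totalWeight K ≤ X := le_max_left _ _
  have hcX : logHeight₁ c / 3 ≤ X := le_max_right _ _
  have hwindow : ∀ p ∈ E, max (logHeight₁ p.1) (logHeight₁ p.2) ∈ Set.Icc X (304 * X) := by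
    intro p hp
    obtain ⟨hlow, hup⟩ := hmem p hp
    have hsol := (hE p hp).one_sub_mul_one_sub
    have hc_le := logHeight₁_le_add_of_one_sub_mul_one_sub_eq hsol
    have hsnd := logHeight₁_snd_le hc hsol
    have hmaxX : max (totalWeight K : ℝ) (logHeight₁ c) ≤ 3 * X :=
      max_le (by linarith [one_le_totalWeight (K := K)]) (by linarith)
    have hle := le_max_left (logHeight₁ p.1) (logHeight₁ p.2)
    have hle' := le_max_right (logHeight₁ p.1) (logHeight₁ p.2)
    exact ⟨max_le (by linarith) (by linarith), max_le (by linarith) (by linarith)⟩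
  have hbase : (32 * 304 + 3 : ℝ) ≤ exp 18 :=
    le_trans (by norm_num) (two_pow_le_exp 18)
  refine (card_le_of_max_logHeight₁_mem_Icc hc hE hDX (by norm_num) hwindow).trans ?_
  gcongr
  refine (exp_one_mul_pow_le (by norm_num) hbase _).trans_eq ?_
  push_cast
  ring_nf

lemma card_le_exp_of_le_logHeight₁_fst (hc : c ≠ 0) {E : Finset (K × K)}
    (hE : ∀ p ∈ E, UnitSolution T c r p)
    (hlow : ∀ p ∈ E, 100 * max (totalWeight K : ℝ) (logHeight₁ c) ≤ logHeight₁ p.1) :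
    (E.card : ℝ) ≤ 2 * exp (38 * Fintype.card (InfinitePlace K ⊕ T)) := by
  have hbase : (835 : ℝ) ≤ exp 10 := le_trans (by norm_num) (two_pow_le_exp 10)
  have hbase' : (103 : ℝ) ≤ exp 7 := le_trans (by norm_num) (two_pow_le_exp 7)
  refine (card_le_of_le_logHeight₁_fst hc hE (fun p hp ↦ ?_) fun p hp ↦ ?_).trans ?_
  · exact (mul_le_mul_of_nonneg_left (le_max_left _ _) (by norm_num)).trans (hlow p hp)
  · exact (mul_le_mul_of_nonneg_left (le_max_right _ _) (by norm_num)).trans (hlow p hp)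
  · grw [exp_one_mul_pow_le (by norm_num) hbase, exp_one_mul_pow_le (by norm_num) hbase',
      mul_assoc, ← exp_add]
    refine le_of_eq ?_
    push_cast
    ring_nf

lemma card_unitSolution_le (hc : c ≠ 0) {E : Finset (K × K)}
    (hE : ∀ p ∈ E, UnitSolution T c r p) :
    (E.card : ℝ) ≤ exp (41 * Fintype.card (InfinitePlace K ⊕ T)) := by
  let M : ℝ := 100 * max (totalWeight K : ℝ) (logHeight₁ c)
  have hsmall := card_le_exp_of_logHeight₁_fst_le hc
    (E := E.filter (logHeight₁ ·.1 ≤ 5 * totalWeight K))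
    (fun p hp ↦ hE p (Finset.mem_filter.mp hp).1) fun p hp ↦ (Finset.mem_filter.mp hp).2
  have hmedium := card_le_exp_of_logHeight₁_fst_mem_Icc hc
    (E := E.filter (logHeight₁ ·.1 ∈ Set.Icc (5 * totalWeight K : ℝ) M))
    (fun p hp ↦ hE p (Finset.mem_filter.mp hp).1) fun p hp ↦ (Finset.mem_filter.mp hp).2
  have hlarge := card_le_exp_of_le_logHeight₁_fst hc
    (E := E.filter (M ≤ logHeight₁ ·.1))
    (fun p hp ↦ hE p (Finset.mem_filter.mp hp).1) fun p hp ↦ (Finset.mem_filter.mp hp).2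
  have hcover : E ⊆ E.filter (logHeight₁ ·.1 ≤ 5 * totalWeight K) ∪
      E.filter (logHeight₁ ·.1 ∈ Set.Icc (5 * totalWeight K : ℝ) M) ∪
        E.filter (M ≤ logHeight₁ ·.1) := by
    intro p hp
    simp only [Finset.mem_union, Finset.mem_filter, Set.mem_Icc, hp, true_and]
    grind
  have hcard : (E.card : ℝ) ≤ _ := Nat.cast_le.mpr
    ((Finset.card_le_card hcover).trans ((Finset.card_union_le _ _).trans
      (Nat.add_le_add_right (Finset.card_union_le _ _) _)))
  push_cast at hcard
  have hone : (1 : ℝ) ≤ Fintype.card (InfinitePlace K ⊕ T) := by exact_mod_cast Fintype.card_pos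
  have hfive : (5 : ℝ) ≤ exp (3 * Fintype.card (InfinitePlace K ⊕ T)) :=
    calc (5 : ℝ) ≤ 2 ^ 3 := by norm_num
      _ ≤ exp 3 := two_pow_le_exp 3
      _ ≤ exp (3 * Fintype.card (InfinitePlace K ⊕ T)) := exp_le_exp.mpr (by linarith)
  calc (E.card : ℝ) ≤ 5 * exp (38 * Fintype.card (InfinitePlace K ⊕ T)) := by linarith
    _ ≤ exp (3 * Fintype.card (InfinitePlace K ⊕ T)) *
        exp (38 * Fintype.card (InfinitePlace K ⊕ T)) := by gcongr
    _ = exp (41 * Fintype.card (InfinitePlace K ⊕ T)) := by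
        rw [← exp_add]
        ring_nf

end Count

end TwistedUnits

section ChordalDistance

variable {R K : Type*} [CommRing R] [Field K]

/-- The determinant of a pair of vectors of length two. -/
def wedge (p r : Fin 2 → R) : R :=
  p 0 * r 1 - p 1 * r 0

lemma wedge_swap (p r : Fin 2 → R) : wedge r p = -wedge p r := by
  simp only [wedge]
  ring

lemma wedge_smul_smul (a b : R) (p r : Fin 2 → R) :
    wedge (a • p) (b • r) = a * b * wedge p r := by
  simp only [wedge, Pi.smul_apply, smul_eq_mul]
  ring

lemma map_wedge {S : Type*} [CommRing S] (f : R →+* S) (p r : Fin 2 → R) :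
    f (wedge p r) = wedge (f ∘ p) (f ∘ r) := by
  simp [wedge]

lemma wedge_mul_apply (p q r : Fin 2 → R) (i : Fin 2) :
    wedge p r * q i = wedge p q * r i + wedge q r * p i := by
  fin_cases i <;> simp only [wedge, Fin.zero_eta, Fin.mk_one] <;> ring

lemma wedge_mul_wedge (p q r s : Fin 2 → R) :
    wedge p q * wedge r s = wedge p s * wedge r q + wedge p r * wedge q s := by
  simp only [wedge]
  ring

lemma mk_eq_mk_iff_wedge_eq_zero {p r : Fin 2 → K} (hp : p ≠ 0) (hr : r ≠ 0) :
    Projectivization.mk K p hp = Projectivization.mk K r hr ↔ wedge p r = 0 := by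
  have hrow : ![p, r] = (Matrix.of ![p, r]).row := rfl
  rw [← not_iff_not, ← ne_eq, ← Projectivization.independent_pair_iff_ne,
    Projectivization.independent_mk_iff_LinearIndependent, hrow,
    Matrix.linearIndependent_rows_iff_isUnit, Matrix.isUnit_iff_isUnit_det, isUnit_iff_ne_zero,
    Matrix.det_fin_two]
  simp [wedge]

lemma wedge_rep_eq_zero_iff {P Q : P1 K} : wedge P.rep Q.rep = 0 ↔ P = Q := by
  rw [← mk_eq_mk_iff_wedge_eq_zero P.rep_nonzero Q.rep_nonzero, P.mk_rep, Q.mk_rep]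

lemma wedge_rep_ne_zero {P Q : P1 K} (h : P ≠ Q) : wedge P.rep Q.rep ≠ 0 :=
  wedge_rep_eq_zero_iff.not.mpr h

variable (v : AbsoluteValue K ℝ)

/-- The maximum of the absolute values of the two coordinates of a vector. -/
noncomputable def maxAbv (p : Fin 2 → K) : ℝ :=
  max (v (p 0)) (v (p 1))

lemma abv_apply_le_maxAbv (p : Fin 2 → K) (i : Fin 2) : v (p i) ≤ maxAbv v p := by
  fin_cases i
  exacts [le_max_left _ _, le_max_right _ _]

lemma exists_maxAbv_eq (p : Fin 2 → K) : ∃ i, maxAbv v p = v (p i) :=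
  (max_choice (v (p 0)) (v (p 1))).elim (⟨0, ·⟩) (⟨1, ·⟩)

lemma maxAbv_smul (a : K) (p : Fin 2 → K) : maxAbv v (a • p) = v a * maxAbv v p := by
  simp only [maxAbv, Pi.smul_apply, smul_eq_mul, map_mul, mul_max_of_nonneg _ _ (apply_nonneg v a)]

lemma maxAbv_pos {p : Fin 2 → K} (hp : p ≠ 0) : 0 < maxAbv v p := by
  obtain ⟨i, hi⟩ := Function.ne_iff.mp hp
  exact (v.pos hi).trans_le (abv_apply_le_maxAbv v p i)

/-- The `v`-adic chordal distance on `ℙ¹(K)`; the paper's logarithmic distance `δ_v` is its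
negative logarithm. -/
noncomputable def chordalDist (P Q : P1 K) : ℝ :=
  v (wedge P.rep Q.rep) / (maxAbv v P.rep * maxAbv v Q.rep)

lemma chordalDist_mk_mk {p r : Fin 2 → K} (hp : p ≠ 0) (hr : r ≠ 0) :
    chordalDist v (Projectivization.mk K p hp) (Projectivization.mk K r hr) =
      v (wedge p r) / (maxAbv v p * maxAbv v r) := by
  obtain ⟨a, ha⟩ := Projectivization.exists_smul_eq_mk_rep K p hp
  obtain ⟨b, hb⟩ := Projectivization.exists_smul_eq_mk_rep K r hr
  have hva : v (a : K) ≠ 0 := v.ne_zero a.ne_zero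
  have hvb : v (b : K) ≠ 0 := v.ne_zero b.ne_zero
  rw [chordalDist, ← ha, ← hb, Units.smul_def, Units.smul_def, wedge_smul_smul, maxAbv_smul,
    maxAbv_smul, map_mul, map_mul, mul_mul_mul_comm (v (a : K)),
    mul_div_mul_left _ _ (mul_ne_zero hva hvb)]

lemma chordalDist_comm (P Q : P1 K) : chordalDist v P Q = chordalDist v Q P := by
  rw [chordalDist, chordalDist, wedge_swap, v.map_neg, mul_comm (maxAbv v P.rep)]

lemma chordalDist_pos {P Q : P1 K} (h : P ≠ Q) : 0 < chordalDist v P Q :=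
  div_pos (v.pos (wedge_rep_ne_zero h))
    (mul_pos (maxAbv_pos v P.rep_nonzero) (maxAbv_pos v Q.rep_nonzero))

variable {v}

lemma chordalDist_le_max (hv : IsNonarchimedean v) (P Q R : P1 K) :
    chordalDist v P R ≤ max (chordalDist v P Q) (chordalDist v Q R) := by
  have hP := maxAbv_pos v P.rep_nonzero
  have hQ := maxAbv_pos v Q.rep_nonzero
  have hR := maxAbv_pos v R.rep_nonzero
  obtain ⟨i, hi⟩ := exists_maxAbv_eq v Q.rep
  have hdivision : chordalDist v P R =
      v (wedge P.rep R.rep * Q.rep i) / (maxAbv v P.rep * maxAbv v Q.rep * maxAbv v R.rep) := by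
    rw [map_mul, ← hi, chordalDist]
    field_simp
  rw [hdivision, wedge_mul_apply]
  refine (div_le_div_of_nonneg_right (hv _ _) (by positivity)).trans ?_
  rw [← max_div_div_right (by positivity), map_mul, map_mul]
  refine max_le_max ?_ ?_
  · grw [abv_apply_le_maxAbv v R.rep i]
    exact (mul_div_mul_right _ _ hR.ne').le
  · grw [abv_apply_le_maxAbv v P.rep i, mul_assoc (maxAbv v P.rep), mul_comm (maxAbv v P.rep)]
    exact (mul_div_mul_right _ _ hP.ne').le

lemma chordalDist_eq_of_le (hv : IsNonarchimedean v) {P Q R : P1 K}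
    (hPQ : chordalDist v P Q ≤ chordalDist v R P) (hPR : chordalDist v P Q ≤ chordalDist v R Q) :
    chordalDist v R P = chordalDist v R Q :=
  le_antisymm ((chordalDist_le_max hv R Q P).trans (max_le le_rfl (chordalDist_comm v P Q ▸ hPR)))
    ((chordalDist_le_max hv R P Q).trans (max_le le_rfl hPQ))

end ChordalDistance

section CrossRatio

variable {K : Type*} [Field K]

/-- The cross ratio of four points of `ℙ¹(K)`, normalized to be `0` when `A = B` or `C = D`; it is
junk when `A = D` or `B = C`. -/
noncomputable def crossRatio (A B C D : P1 K) : K :=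
  wedge A.rep B.rep * wedge C.rep D.rep / (wedge A.rep D.rep * wedge C.rep B.rep)

lemma crossRatio_ne_zero {A B C D : P1 K} (hAB : A ≠ B) (hCD : C ≠ D) (hAD : A ≠ D) (hCB : C ≠ B) :
    crossRatio A B C D ≠ 0 :=
  div_ne_zero (mul_ne_zero (wedge_rep_ne_zero hAB) (wedge_rep_ne_zero hCD))
    (mul_ne_zero (wedge_rep_ne_zero hAD) (wedge_rep_ne_zero hCB))

lemma abv_crossRatio (v : AbsoluteValue K ℝ) (A B C D : P1 K) :
    v (crossRatio A B C D) = chordalDist v A B * chordalDist v C D /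
      (chordalDist v A D * chordalDist v C B) := by
  have hA := maxAbv_pos v A.rep_nonzero
  have hB := maxAbv_pos v B.rep_nonzero
  have hC := maxAbv_pos v C.rep_nonzero
  have hD := maxAbv_pos v D.rep_nonzero
  simp only [crossRatio, chordalDist, map_div₀, map_mul]
  field_simp

lemma one_sub_crossRatio {A B C D : P1 K} (hAD : A ≠ D) (hCB : C ≠ B) :
    1 - crossRatio A B C D = crossRatio A C B D := by
  have hAD' := wedge_rep_ne_zero hAD
  have hCB' := wedge_rep_ne_zero hCB
  rw [crossRatio, crossRatio, wedge_swap C.rep B.rep]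
  field_simp
  linear_combination -wedge_mul_wedge A.rep B.rep C.rep D.rep

lemma one_sub_crossRatio_mul_one_sub_crossRatio {P Q Q' A R : P1 K} (hPQ : P ≠ Q)
    (hAQ' : A ≠ Q') (hRP : R ≠ P) (hRQ' : R ≠ Q') :
    (1 - crossRatio R Q P Q') * (1 - crossRatio R A Q' P) = crossRatio Q Q' A P := by
  have hRP' := wedge_rep_ne_zero hRP
  have hRQ'' := wedge_rep_ne_zero hRQ'
  rw [one_sub_crossRatio hRQ' hPQ, one_sub_crossRatio hRP hAQ'.symm, crossRatio, crossRatio,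
    crossRatio]
  field_simp

lemma eq_of_crossRatio_eq {A A' B C D : P1 K} (hAD : A ≠ D) (hA'D : A' ≠ D) (hCB : C ≠ B)
    (hCD : C ≠ D) (hBD : B ≠ D) (h : crossRatio A B C D = crossRatio A' B C D) : A = A' := by
  have hCB' := wedge_rep_ne_zero hCB
  have hCD' := wedge_rep_ne_zero hCD
  have hBD' := wedge_rep_ne_zero hBD
  have hAD' := wedge_rep_ne_zero hAD
  have hA'D' := wedge_rep_ne_zero hA'D
  rw [crossRatio, crossRatio] at h
  field_simp at h
  refine wedge_rep_eq_zero_iff.mp ((mul_eq_zero_iff_right hBD').mp ?_)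
  linear_combination h - wedge_mul_wedge A.rep B.rep A'.rep D.rep

end CrossRatio

section GoodReduction

/-- The value at `p` of the pair `(F, G)` of polynomials in two variables. -/
noncomputable def evalPair {R : Type*} [CommRing R] (F G : MvPolynomial (Fin 2) R)
    (p : Fin 2 → R) : Fin 2 → R :=
  ![eval p F, eval p G]

section Forms

variable {R : Type*} [CommRing R] {n : ℕ} {F G : MvPolynomial (Fin 2) R}

lemma comp_evalPair {S : Type*} [CommRing S] (f : R →+* S) (F G : MvPolynomial (Fin 2) R)
    (p : Fin 2 → R) : f ∘ evalPair F G p = evalPair (map f F) (map f G) (f ∘ p) := by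
  ext i
  fin_cases i <;> exact map_eval f p _

lemma evalPair_C_mul_C_mul (c : R) (F G : MvPolynomial (Fin 2) R) (p : Fin 2 → R) :
    evalPair (C c * F) (C c * G) p = c • evalPair F G p := by
  ext i
  fin_cases i <;> simp [evalPair]

lemma wedge_dvd_monomials (p q : Fin 2 → R) {a b c e : ℕ} (h : a + b = c + e) :
    wedge p q ∣ p 0 ^ a * p 1 ^ b * (q 0 ^ c * q 1 ^ e) -
      p 0 ^ c * p 1 ^ e * (q 0 ^ a * q 1 ^ b) := by
  wlog hca : c ≤ a generalizing a b c e
  · rw [← neg_sub, dvd_neg]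
    exact this h.symm (by omega)
  obtain ⟨k, rfl⟩ := Nat.exists_eq_add_of_le hca
  obtain rfl : e = k + b := by omega
  have hfactor : p 0 ^ (c + k) * p 1 ^ b * (q 0 ^ c * q 1 ^ (k + b)) -
      p 0 ^ c * p 1 ^ (k + b) * (q 0 ^ (c + k) * q 1 ^ b) =
      (p 0 * q 0) ^ c * (p 1 * q 1) ^ b * ((p 0 * q 1) ^ k - (p 1 * q 0) ^ k) := by
    ring
  rw [hfactor]
  exact (sub_dvd_pow_sub_pow _ _ k).mul_left _

lemma wedge_dvd_wedge_evalPair (hF : F.IsHomogeneous n) (hG : G.IsHomogeneous n)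
    (p q : Fin 2 → R) : wedge p q ∣ wedge (evalPair F G p) (evalPair F G q) := by
  have hexpand : wedge (evalPair F G p) (evalPair F G q) =
      ∑ m ∈ F.support, ∑ l ∈ G.support, F.coeff m * G.coeff l *
        (p 0 ^ m 0 * p 1 ^ m 1 * (q 0 ^ l 0 * q 1 ^ l 1) -
          p 0 ^ l 0 * p 1 ^ l 1 * (q 0 ^ m 0 * q 1 ^ m 1)) := by
    simp only [wedge, evalPair, Matrix.cons_val_zero, Matrix.cons_val_one, eval_eq',
      Fin.prod_univ_two, mul_sub, Finset.sum_sub_distrib, Finset.sum_mul_sum]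
    rw [Finset.sum_comm (s := G.support)]
    congr 1 <;> exact Finset.sum_congr rfl fun m _ ↦ Finset.sum_congr rfl fun l _ ↦ by ring
  rw [hexpand]
  refine Finset.dvd_sum fun m hm ↦ Finset.dvd_sum fun l hl ↦ (wedge_dvd_monomials p q ?_).mul_left _
  have hdegree {H : MvPolynomial (Fin 2) R} (hH : H.IsHomogeneous n) {k : Fin 2 →₀ ℕ}
      (hk : k ∈ H.support) : k 0 + k 1 = n := by
    simpa [Finsupp.weight_apply, Finsupp.sum_fintype] using hH (mem_support_iff.mp hk)
  rw [hdegree hF hm, hdegree hG hl]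

lemma exists_isUnit_evalPair {A L : Type*} [CommRing A] [IsLocalRing A] [Field L]
    (f : IsLocalRing.ResidueField A →+* L) {F G : MvPolynomial (Fin 2) A}
    (hFG : ∀ x y : L, eval ![x, y] (map (f.comp (IsLocalRing.residue A)) F) = 0 →
      eval ![x, y] (map (f.comp (IsLocalRing.residue A)) G) = 0 → x = 0 ∧ y = 0)
    {p : Fin 2 → A} (hp : ∃ i, IsUnit (p i)) : ∃ i, IsUnit (evalPair F G p i) := by
  set ρ := f.comp (IsLocalRing.residue A)
  by_contra! hnonunit
  have hzero (i : Fin 2) : ρ (evalPair F G p i) = 0 := by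
    rw [RingHom.comp_apply, (IsLocalRing.residue_eq_zero_iff _).mpr
      ((IsLocalRing.mem_maximalIdeal _).mpr (hnonunit i)), map_zero]
  have heval (H : MvPolynomial (Fin 2) A) :
      eval ![ρ (p 0), ρ (p 1)] (map ρ H) = ρ (eval p H) := by
    rw [map_eval]
    congr 2
    ext i
    fin_cases i <;> rfl
  obtain ⟨h0, h1⟩ := hFG (ρ (p 0)) (ρ (p 1)) ((heval F).trans (hzero 0)) ((heval G).trans (hzero 1))
  obtain ⟨i, hi⟩ := hp
  refine (hi.map ρ).ne_zero ?_
  fin_cases i <;> assumption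

end Forms

namespace P1Map

variable {K : Type*} [Field K] {d : ℕ}

lemma evalPair_ne_zero (φ : P1Map K d) {p : Fin 2 → K} (hp : p ≠ 0) : evalPair φ.F φ.G p ≠ 0 := by
  intro h
  have hcoord : ![algebraMap K (AlgebraicClosure K) (p 0), algebraMap K _ (p 1)] =
      algebraMap K _ ∘ p := by
    ext i
    fin_cases i <;> rfl
  have hF : eval p φ.F = 0 := congrFun h 0
  have hG : eval p φ.G = 0 := congrFun h 1
  obtain ⟨h0, h1⟩ := φ.coprime (algebraMap K _ (p 0)) (algebraMap K _ (p 1))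
    (by rw [hcoord, aeval_algebraMap_apply, aeval_eq_eval, hF, map_zero])
    (by rw [hcoord, aeval_algebraMap_apply, aeval_eq_eval, hG, map_zero])
  refine hp (funext fun i ↦ ?_)
  fin_cases i
  · simpa using h0
  · simpa using h1

lemma toFun_mk (φ : P1Map K d) {p : Fin 2 → K} (hp : p ≠ 0) :
    φ.toFun (Projectivization.mk K p hp) =
      Projectivization.mk K (evalPair φ.F φ.G p) (φ.evalPair_ne_zero hp) := by
  obtain ⟨x, y, rfl⟩ : ∃ x y, p = ![x, y] := ⟨p 0, p 1, List.ofFn_inj.mp rfl⟩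
  exact φ.compat x y hp (φ.evalPair_ne_zero hp)

end P1Map

section ValuationSubring

variable {K : Type*} [Field K] {d : ℕ} (A : ValuationSubring K)

lemma exists_rep_isUnit (P : P1 K) :
    ∃ p : Fin 2 → A, (∃ i, IsUnit (p i)) ∧
      ∃ h : A.subtype ∘ p ≠ 0, P = Projectivization.mk K (A.subtype ∘ p) h := by
  obtain ⟨i, hi⟩ := Finite.exists_max fun j ↦ A.valuation (P.rep j)
  have hPi : P.rep i ≠ 0 := by
    intro h0
    refine P.rep_nonzero (funext fun j ↦ ?_)
    simpa [h0] using hi j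
  let p (j : Fin 2) : A := ⟨P.rep j / P.rep i, by
    rw [← A.valuation_le_one_iff, map_div₀]
    exact div_le_one_of_le₀ (hi j) zero_le⟩
  have hrep : A.subtype ∘ p = (P.rep i)⁻¹ • P.rep := by
    ext j
    simp [p, div_eq_inv_mul]
  have hpi : p i = 1 := Subtype.ext (div_self hPi)
  refine ⟨p, ⟨i, hpi ▸ isUnit_one⟩, hrep ▸ smul_ne_zero (inv_ne_zero hPi) P.rep_nonzero, ?_⟩
  conv_lhs => rw [← P.mk_rep]
  rw [Projectivization.mk_eq_mk_iff']
  exact ⟨P.rep i, by rw [hrep, smul_inv_smul₀ hPi]⟩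

variable {A} {v : AbsoluteValue K ℝ}

lemma abv_coe_eq_one_of_isUnit (hA : ∀ x : A, v x ≤ 1) {x : A} (hx : IsUnit x) : v x = 1 := by
  obtain ⟨u, rfl⟩ := hx
  refine (hA _).antisymm ?_
  calc (1 : ℝ) = v (u : A) * v (↑u⁻¹ : A) := by
        rw [← map_mul, ← MulMemClass.coe_mul, u.mul_inv, OneMemClass.coe_one, map_one]
    _ ≤ v (u : A) := mul_le_of_le_one_right (apply_nonneg v _) (hA _)

lemma maxAbv_subtype_comp_eq_one (hA : ∀ x : A, v x ≤ 1) {p : Fin 2 → A}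
    (hp : ∃ i, IsUnit (p i)) : maxAbv v (A.subtype ∘ p) = 1 := by
  obtain ⟨i, hi⟩ := hp
  refine le_antisymm (max_le (hA _) (hA _)) ?_
  rw [← abv_coe_eq_one_of_isUnit hA hi]
  exact abv_apply_le_maxAbv v (A.subtype ∘ p) i

/-- In primitive integral coordinates the chordal distance is `|p ∧ r|`, and `φ` maps primitive
coordinates to primitive ones, so the claim is the divisibility `p ∧ r ∣ φ p ∧ φ r`. -/
lemma chordalDist_toFun_le_of_isUnit_evalPair (hA : ∀ x : A, v x ≤ 1) {φ : P1Map K d} {c : K}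
    (hc : c ≠ 0) {F₀ G₀ : MvPolynomial (Fin 2) A} (hF₀ : map A.subtype F₀ = C c * φ.F)
    (hG₀ : map A.subtype G₀ = C c * φ.G)
    (hunit : ∀ p : Fin 2 → A, (∃ i, IsUnit (p i)) → ∃ i, IsUnit (evalPair F₀ G₀ p i))
    (P R : P1 K) : chordalDist v (φ.toFun P) (φ.toFun R) ≤ chordalDist v P R := by
  have himage (p : Fin 2 → A) :
      A.subtype ∘ evalPair F₀ G₀ p = c • evalPair φ.F φ.G (A.subtype ∘ p) := by
    rw [comp_evalPair, hF₀, hG₀, evalPair_C_mul_C_mul]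
  have hne {p : Fin 2 → A} (hp : A.subtype ∘ p ≠ 0) : A.subtype ∘ evalPair F₀ G₀ p ≠ 0 :=
    himage p ▸ smul_ne_zero hc (φ.evalPair_ne_zero hp)
  have htoFun {p : Fin 2 → A} (hp : A.subtype ∘ p ≠ 0) :
      φ.toFun (Projectivization.mk K (A.subtype ∘ p) hp) =
        Projectivization.mk K (A.subtype ∘ evalPair F₀ G₀ p) (hne hp) := by
    rw [φ.toFun_mk, eq_comm, Projectivization.mk_eq_mk_iff']
    exact ⟨c, (himage p).symm⟩
  have hF₀' : F₀.IsHomogeneous d :=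
    .of_map A.subtype_injective (by simpa [hF₀] using (isHomogeneous_C _ c).mul φ.homF)
  have hG₀' : G₀.IsHomogeneous d :=
    .of_map A.subtype_injective (by simpa [hG₀] using (isHomogeneous_C _ c).mul φ.homG)
  obtain ⟨p, hp, hp0, rfl⟩ := exists_rep_isUnit A P
  obtain ⟨r, hr, hr0, rfl⟩ := exists_rep_isUnit A R
  obtain ⟨k, hk⟩ := wedge_dvd_wedge_evalPair hF₀' hG₀' p r
  rw [htoFun hp0, htoFun hr0, chordalDist_mk_mk, chordalDist_mk_mk,
    maxAbv_subtype_comp_eq_one hA hp, maxAbv_subtype_comp_eq_one hA hr,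
    maxAbv_subtype_comp_eq_one hA (hunit p hp), maxAbv_subtype_comp_eq_one hA (hunit r hr),
    ← map_wedge, ← map_wedge, mul_one, div_one, div_one, hk, map_mul, map_mul]
  exact mul_le_of_le_one_right (apply_nonneg _ _) (hA k)

end ValuationSubring

variable {K : Type*} [Field K] [NumberField K] {d : ℕ}

open NumberField.HeightOneSpectrum

lemma adicAbv_coe_valuationSubring_le_one (q : HeightOneSpectrum (𝓞 K))
    (x : (q.valuation K).valuationSubring) : adicAbv K q (x : K) ≤ 1 := by
  rw [adicAbv_def]
  exact_mod_cast (WithZeroMulInt.toNNReal_le_one_iff (one_lt_absNorm_nnreal q)).mpr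
    ((Valuation.mem_valuationSubring_iff _ _).mp x.2)

lemma GoodReductionAt.chordalDist_toFun_le {φ : P1Map K d} {q : HeightOneSpectrum (𝓞 K)}
    (hq : GoodReductionAt φ q) (P R : P1 K) :
    chordalDist (adicAbv K q) (φ.toFun P) (φ.toFun R) ≤ chordalDist (adicAbv K q) P R := by
  obtain ⟨c, hc, F₀, G₀, hF₀, hG₀, -, hresidue⟩ := hq
  exact chordalDist_toFun_le_of_isUnit_evalPair (adicAbv_coe_valuationSubring_le_one q) hc hF₀ hG₀
    (fun _ hp ↦ exists_isUnit_evalPair _ hresidue hp) P R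

end GoodReduction

section BinaryForms

section Roots

/-- The polynomial `H(X, 1)` in one variable attached to a polynomial `H` in two variables. -/
noncomputable def dehomogenize {R : Type*} [CommSemiring R] (H : MvPolynomial (Fin 2) R) :
    Polynomial R :=
  aeval ![Polynomial.X, 1] H

variable {R : Type*} [CommRing R] {n : ℕ} {H : MvPolynomial (Fin 2) R}

lemma eval_dehomogenize (x : R) (H : MvPolynomial (Fin 2) R) :
    (dehomogenize H).eval x = eval ![x, 1] H := by
  have hcomp : (Polynomial.aeval x).comp
      (aeval ![Polynomial.X, 1] : MvPolynomial (Fin 2) R →ₐ[R] Polynomial R) = aeval ![x, 1] := by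
    ext i
    fin_cases i <;> simp
  exact (DFunLike.congr_fun hcomp H).trans (by rw [aeval_eq_eval])

lemma homogenize_dehomogenize (hH : H.IsHomogeneous n) : (dehomogenize H).homogenize n = H :=
  Polynomial.homogenize_eq_of_isHomogeneous hH rfl

lemma eval_eq_sum_coeff_dehomogenize (hH : H.IsHomogeneous n) (p : Fin 2 → R) :
    eval p H =
      ∑ j : Fin (n + 1), (dehomogenize H).coeff j * (p 0 ^ (j : ℕ) * p 1 ^ (j.rev : ℕ)) := by
  conv_lhs => rw [← homogenize_dehomogenize hH]
  rw [Polynomial.homogenize, map_sum, Finset.Nat.sum_antidiagonal_eq_sum_range_succ_mk,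
    Finset.sum_range]
  refine Finset.sum_congr rfl fun j _ ↦ ?_
  simp [eval_monomial, Finsupp.prod_fintype, Fin.val_rev]

/-- By the projective Vandermonde determinant, the coefficients of a form of degree `n` are
determined by its values at `n + 1` pairwise independent vectors. -/
lemma eq_zero_of_eval_eq_zero [IsDomain R] (hH : H.IsHomogeneous n) {p : Fin (n + 1) → Fin 2 → R}
    (hp : Pairwise fun i j ↦ wedge (p i) (p j) ≠ 0) (h : ∀ i, eval (p i) H = 0) : H = 0 := by
  let V := Matrix.projVandermonde (fun i ↦ p i 0) (fun i ↦ p i 1)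
  have hdet : V.det ≠ 0 := by
    rw [Matrix.det_projVandermonde]
    refine Finset.prod_ne_zero_iff.mpr fun i _ ↦ Finset.prod_ne_zero_iff.mpr fun j hj ↦ ?_
    have hij : wedge (p j) (p i) ≠ 0 := hp (Finset.mem_Ioi.mp hj).ne'
    rwa [wedge, mul_comm (p j 1)] at hij
  have hcoeff : (fun j : Fin (n + 1) ↦ (dehomogenize H).coeff j) = 0 := by
    refine Matrix.eq_zero_of_mulVec_eq_zero hdet (funext fun i ↦ ?_)
    rw [Pi.zero_apply, ← h i, eval_eq_sum_coeff_dehomogenize hH, Matrix.mulVec, dotProduct]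
    exact Finset.sum_congr rfl fun j _ ↦ mul_comm _ _
  rw [← homogenize_dehomogenize hH, Polynomial.homogenize]
  refine Finset.sum_eq_zero fun kl hkl ↦ ?_
  have hkl0 : (dehomogenize H).coeff kl.1 = 0 :=
    congrFun hcoeff ⟨kl.1, Finset.Nat.antidiagonal.fst_lt hkl⟩
  rw [hkl0, monomial_zero]

lemma card_le_of_eval_rep_eq_zero {K : Type*} [Field K] {H : MvPolynomial (Fin 2) K}
    (hH : H.IsHomogeneous n) (hH0 : H ≠ 0) {E : Finset (P1 K)} (hE : ∀ A ∈ E, eval A.rep H = 0) :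
    E.card ≤ n := by
  by_contra! hcard
  obtain ⟨E', hE', hcard'⟩ := Finset.exists_subset_card_eq (Nat.succ_le_of_lt hcard)
  let e := E'.equivFinOfCardEq hcard'
  refine hH0 (eq_zero_of_eval_eq_zero hH (p := fun i ↦ (e.symm i : P1 K).rep) ?_
    fun i ↦ hE _ (hE' (e.symm i).2))
  exact fun i j hij ↦ wedge_rep_ne_zero fun h ↦ hij (e.symm.injective (Subtype.ext h))

lemma exists_ne_zero_eval_eq_zero {L : Type*} [Field L] [IsAlgClosed L]
    {H : MvPolynomial (Fin 2) L} (hH : H.IsHomogeneous n) (hn : n ≠ 0) :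
    ∃ p ≠ 0, eval p H = 0 := by
  by_cases hlead : (dehomogenize H).coeff n = 0
  · refine ⟨![1, 0], by simp, ?_⟩
    rw [eval_eq_sum_coeff_dehomogenize hH, Fin.sum_univ_castSucc]
    have hrev (j : Fin n) : (j.castSucc.rev : ℕ) ≠ 0 := by
      rw [Fin.val_rev, Fin.val_castSucc]
      omega
    simp only [Matrix.cons_val_zero, Matrix.cons_val_one, Fin.val_last, hlead, zero_pow (hrev _)]
    simp
  · have hdegree : (dehomogenize H).degree ≠ 0 := fun h ↦
      hlead (Polynomial.coeff_eq_zero_of_degree_lt (h ▸ by exact_mod_cast Nat.pos_of_ne_zero hn))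
    obtain ⟨x, hx⟩ := IsAlgClosed.exists_root _ hdegree
    exact ⟨![x, 1], by simp, (eval_dehomogenize x H).symm.trans hx⟩

end Roots

section Preimages

variable {K : Type*} [Field K] {d : ℕ}

lemma exists_wedge_ne_zero {p : Fin 2 → K} (hp : p ≠ 0) : ∃ r, wedge p r ≠ 0 := by
  contrapose! hp
  ext i
  fin_cases i
  · simpa [wedge] using hp ![0, 1]
  · simpa [wedge] using hp ![1, 0]

namespace P1Map

/-- The form `p₀ G - p₁ F`, whose zeros are the preimages of the point `[p₀ : p₁]` under
`φ = [F : G]`. -/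
noncomputable def fiberForm (φ : P1Map K d) (p : Fin 2 → K) : MvPolynomial (Fin 2) K :=
  C (p 0) * φ.G - C (p 1) * φ.F

lemma fiberForm_isHomogeneous (φ : P1Map K d) (p : Fin 2 → K) :
    (φ.fiberForm p).IsHomogeneous d :=
  .sub (φ.homG.C_mul _) (φ.homF.C_mul _)

lemma eval_fiberForm (φ : P1Map K d) (p q : Fin 2 → K) :
    eval q (φ.fiberForm p) = wedge p (evalPair φ.F φ.G q) := by
  simp [fiberForm, wedge, evalPair]

lemma eval_map_fiberForm {L : Type*} [Field L] (f : K →+* L) (φ : P1Map K d) (p : Fin 2 → K)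
    (q : Fin 2 → L) : eval q (map f (φ.fiberForm p)) =
      wedge (f ∘ p) (evalPair (map f φ.F) (map f φ.G) q) := by
  simp [fiberForm, wedge, evalPair]

/-- If the form vanished, a zero over the algebraic closure of `fiberForm φ r`, for some `r`
independent of `p`, would be a common zero of `F` and `G`. -/
lemma fiberForm_ne_zero (φ : P1Map K d) (hd : d ≠ 0) {p : Fin 2 → K} (hp : p ≠ 0) :
    φ.fiberForm p ≠ 0 := by
  intro h
  obtain ⟨r, hr⟩ := exists_wedge_ne_zero hp
  let f := algebraMap K (AlgebraicClosure K)
  obtain ⟨q, hq, hqr⟩ := exists_ne_zero_eval_eq_zero ((φ.fiberForm_isHomogeneous r).map f) hd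
  have hqp : eval q (map f (φ.fiberForm p)) = 0 := by rw [h, map_zero, map_zero]
  rw [eval_map_fiberForm] at hqr hqp
  have hcommon (i : Fin 2) : evalPair (map f φ.F) (map f φ.G) q i = 0 := by
    have hexpand := wedge_mul_apply (f ∘ p) (evalPair (map f φ.F) (map f φ.G) q) (f ∘ r) i
    rw [wedge_swap (f ∘ r) (evalPair _ _ q), hqr, hqp, ← map_wedge] at hexpand
    simpa [hr] using hexpand
  have hpair : ![q 0, q 1] = q := List.ofFn_inj.mp rfl
  obtain ⟨h0, h1⟩ := φ.coprime (q 0) (q 1)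
    (by simpa [evalPair, hpair, eval_map, aeval_def] using hcommon 0)
    (by simpa [evalPair, hpair, eval_map, aeval_def] using hcommon 1)
  refine hq (funext fun i ↦ ?_)
  fin_cases i
  exacts [h0, h1]

lemma toFun_eq_iff (φ : P1Map K d) {A P : P1 K} :
    φ.toFun A = P ↔ eval A.rep (φ.fiberForm P.rep) = 0 := by
  rw [eval_fiberForm]
  conv_lhs => rw [← A.mk_rep, ← P.mk_rep, eq_comm, φ.toFun_mk A.rep_nonzero]
  exact mk_eq_mk_iff_wedge_eq_zero P.rep_nonzero (φ.evalPair_ne_zero A.rep_nonzero)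

lemma card_le_of_toFun_eq (φ : P1Map K d) (hd : d ≠ 0) {P : P1 K} {E : Finset (P1 K)}
    (hE : ∀ A ∈ E, φ.toFun A = P) : E.card ≤ d :=
  card_le_of_eval_rep_eq_zero (φ.fiberForm_isHomogeneous P.rep)
    (φ.fiberForm_ne_zero hd P.rep_nonzero) fun A hA ↦ φ.toFun_eq_iff.mp (hE A hA)

lemma card_add_one_le_of_toFun_eq (φ : P1Map K d) (hd : d ≠ 0) {P : P1 K} (hP : φ.toFun P = P)
    {E : Finset (P1 K)} (hE : ∀ A ∈ E, A ≠ P ∧ φ.toFun A = P) : E.card + 1 ≤ d := by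
  rw [← Finset.card_insert_of_notMem fun h ↦ (hE P h).1 rfl]
  refine φ.card_le_of_toFun_eq (P := P) hd fun A hA ↦ ?_
  rcases Finset.mem_insert.mp hA with rfl | hA
  exacts [hP, (hE A hA).2]

end P1Map

end Preimages

end BinaryForms

section TwoCycles

section Orbits

variable {α : Type*} {f : α → α} {P Q Q' R : α}

lemma iterate_two_cycle (hQ : f Q = Q') (hQ' : f Q' = Q) (n : ℕ) :
    (f^[n] Q = Q ∧ f^[n] Q' = Q') ∨ (f^[n] Q = Q' ∧ f^[n] Q' = Q) := by
  induction n with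
  | zero => exact Or.inl ⟨rfl, rfl⟩
  | succ n ih =>
    rw [Function.iterate_succ_apply', Function.iterate_succ_apply']
    rcases ih with ⟨h, h'⟩ | ⟨h, h'⟩ <;> rw [h, h']
    · exact Or.inr ⟨hQ, hQ'⟩
    · exact Or.inl ⟨hQ', hQ⟩

lemma ne_of_iterate_eq_of_two_cycle (hP : f P = P) (hQ : f Q = Q') (hQ' : f Q' = Q) (hne : Q ≠ Q')
    {n : ℕ} (hR : f^[n] R = P) : R ≠ Q := by
  rintro rfl
  rcases iterate_two_cycle hQ hQ' n with ⟨h, -⟩ | ⟨h, -⟩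
  · obtain rfl := h.symm.trans hR
    exact hne (hP.symm.trans hQ)
  · obtain rfl := h.symm.trans hR
    exact hne (hQ'.symm.trans hP)

lemma exists_iterate_ne_and_apply_eq (hRP : R ≠ P) {n : ℕ} (hR : f^[n] R = P) :
    ∃ m, f^[m] R ≠ P ∧ f (f^[m] R) = P := by
  induction n with
  | zero => exact absurd hR hRP
  | succ n ih =>
    by_cases hn : f^[n] R = P
    · exact ih hn
    · exact ⟨n, hn, (Function.iterate_succ_apply' f n R).symm.trans hR⟩

end Orbits

section NonExpanding

variable {K : Type*} [Field K] {v : AbsoluteValue K ℝ} {f : P1 K → P1 K}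
  {P Q Q' A R : P1 K} {n : ℕ}

lemma chordalDist_iterate_le (hf : ∀ X Y, chordalDist v (f X) (f Y) ≤ chordalDist v X Y) (n : ℕ)
    (X Y : P1 K) : chordalDist v (f^[n] X) (f^[n] Y) ≤ chordalDist v X Y := by
  induction n with
  | zero => exact le_rfl
  | succ n ih =>
    rw [Function.iterate_succ_apply', Function.iterate_succ_apply']
    exact (hf _ _).trans ih

lemma chordalDist_eq_of_two_cycle (hf : ∀ X Y, chordalDist v (f X) (f Y) ≤ chordalDist v X Y)
    (hP : f P = P) (hQ : f Q = Q') (hQ' : f Q' = Q) : chordalDist v P Q = chordalDist v P Q' := by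
  refine le_antisymm ?_ ?_
  · simpa only [hP, hQ'] using hf P Q'
  · simpa only [hP, hQ] using hf P Q

lemma abv_crossRatio_two_cycle_eq_one (hv : IsNonarchimedean v)
    (hf : ∀ X Y, chordalDist v (f X) (f Y) ≤ chordalDist v X Y) (hP : f P = P) (hQ : f Q = Q')
    (hQ' : f Q' = Q) (hPQ : P ≠ Q) (hR : f^[n] R = P) : v (crossRatio R Q P Q') = 1 := by
  have hPQ' := chordalDist_eq_of_two_cycle hf hP hQ hQ'
  have hPR : chordalDist v P Q ≤ chordalDist v R Q ∧ chordalDist v P Q ≤ chordalDist v R Q' := by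
    have hRQ := chordalDist_iterate_le hf n R Q
    have hRQ' := chordalDist_iterate_le hf n R Q'
    rw [hR] at hRQ hRQ'
    rcases iterate_two_cycle hQ hQ' n with ⟨h, h'⟩ | ⟨h, h'⟩ <;> rw [h] at hRQ <;> rw [h'] at hRQ'
    · exact ⟨hRQ, hPQ' ▸ hRQ'⟩
    · exact ⟨hPQ' ▸ hRQ, hRQ'⟩
  have hQQ' : chordalDist v Q Q' ≤ chordalDist v P Q :=
    (chordalDist_le_max hv Q P Q').trans (max_le (chordalDist_comm v Q P).le hPQ'.ge)
  have hPQ_pos := chordalDist_pos v hPQ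
  rw [abv_crossRatio, chordalDist_eq_of_le hv (hQQ'.trans hPR.1) (hQQ'.trans hPR.2), ← hPQ',
    div_self (mul_pos (hPQ_pos.trans_le hPR.2) hPQ_pos).ne']

lemma abv_crossRatio_of_iterate_eq (hv : IsNonarchimedean v)
    (hf : ∀ X Y, chordalDist v (f X) (f Y) ≤ chordalDist v X Y) (hP : f P = P) (hA : f A = P)
    (hRP : R ≠ P) (hRA : R ≠ A) (hR : f^[n] R = A) (Q : P1 K) :
    v (crossRatio R A Q P) = chordalDist v Q P / chordalDist v Q A := by
  have hAn : f^[n] A = P := by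
    cases n with
    | zero => exact absurd hR hRA
    | succ n => rw [Function.iterate_succ_apply, hA, Function.iterate_fixed hP]
  have hAR := chordalDist_iterate_le hf n R A
  have hAR' := chordalDist_iterate_le hf n R P
  rw [hR, hAn] at hAR
  rw [hR, Function.iterate_fixed hP] at hAR'
  rw [abv_crossRatio, chordalDist_eq_of_le hv hAR hAR',
    mul_div_mul_left _ _ (chordalDist_pos v hRP).ne']

lemma chordalDist_le_of_two_cycle (hf : ∀ X Y, chordalDist v (f X) (f Y) ≤ chordalDist v X Y)
    (hP : f P = P) (hA : f A = P) (hQ : f Q = Q') (hQ' : f Q' = Q) :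
    chordalDist v Q' P ≤ chordalDist v Q' A :=
  calc chordalDist v Q' P = chordalDist v P Q := by
        rw [chordalDist_eq_of_two_cycle hf hP hQ hQ', chordalDist_comm]
    _ = chordalDist v (f Q') (f A) := by rw [hA, hQ', chordalDist_comm]
    _ ≤ chordalDist v Q' A := hf _ _

end NonExpanding

end TwoCycles

section TailCount

variable {K : Type*} [Field K] [NumberField K] {d : ℕ} {φ : P1Map K d}
  {T : Finset (HeightOneSpectrum (𝓞 K))} {P Q Q' A R : P1 K}

open NumberField.HeightOneSpectrum

lemma unitSolution_crossRatio (hφ : GoodReductionOutside φ T) (hP : φ.toFun P = P)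
    (hQ : φ.toFun Q = Q') (hQ' : φ.toFun Q' = Q) (hne : Q ≠ Q') (hA : φ.toFun A = P) (hAP : A ≠ P)
    (hRA : R ≠ A) {n : ℕ} (hR : φ.toFun^[n] R = A) :
    UnitSolution T (crossRatio Q Q' A P)
      (fun q ↦ chordalDist (adicAbv K q) Q' P / chordalDist (adicAbv K q) Q' A)
      (crossRatio R Q P Q', crossRatio R A Q' P) := by
  have hRP' : φ.toFun^[n + 1] R = P := by rw [Function.iterate_succ_apply', hR, hA]
  have hne_two_cycle {X : P1 K} {m : ℕ} (hX : φ.toFun^[m] X = P) : X ≠ Q ∧ X ≠ Q' :=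
    ⟨ne_of_iterate_eq_of_two_cycle hP hQ hQ' hne hX,
      ne_of_iterate_eq_of_two_cycle hP hQ' hQ hne.symm hX⟩
  obtain ⟨hPQ, hPQ'⟩ := hne_two_cycle (m := 0) (X := P) rfl
  obtain ⟨-, hAQ'⟩ := hne_two_cycle (m := 1) hA
  obtain ⟨hRQ, hRQ'⟩ := hne_two_cycle hRP'
  have hRP : R ≠ P := by
    rintro rfl
    exact hAP (hR.symm.trans (Function.iterate_fixed hP n))
  have hf (q) (hq : q ∉ T) := (hφ q hq).chordalDist_toFun_le
  have hsnd (q) (hq : q ∉ T) :=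
    abv_crossRatio_of_iterate_eq (isNonarchimedean_adicAbv K q) (hf q hq) hP hA hRP hRA hR Q'
  exact {
    fst_ne_zero := crossRatio_ne_zero hRQ hPQ' hRQ' hPQ
    snd_ne_zero := crossRatio_ne_zero hRA hPQ'.symm hRP hAQ'.symm
    one_sub_mul_one_sub := one_sub_crossRatio_mul_one_sub_crossRatio hPQ hAQ' hRP hRQ'
    adicAbv_fst q hq := abv_crossRatio_two_cycle_eq_one (isNonarchimedean_adicAbv K q) (hf q hq)
      hP hQ hQ' hPQ hRP'
    adicAbv_snd := hsnd
    adicAbv_snd_le_one q hq := hsnd q hq ▸ div_le_one_of_le₀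
      (chordalDist_le_of_two_cycle (hf q hq) hP hA hQ hQ') (chordalDist_pos _ hAQ'.symm).le }

lemma card_le_exp_of_iterate_eq (hφ : GoodReductionOutside φ T) (hP : φ.toFun P = P)
    (hQ : φ.toFun Q = Q') (hQ' : φ.toFun Q' = Q) (hne : Q ≠ Q') (hA : φ.toFun A = P) (hAP : A ≠ P)
    {E : Finset (P1 K)} (hE : ∀ R ∈ E, R ≠ A ∧ ∃ n, φ.toFun^[n] R = A) :
    (E.card : ℝ) ≤ Real.exp (41 * sCard K T) := by
  have hPQ : P ≠ Q := ne_of_iterate_eq_of_two_cycle hP hQ hQ' hne (n := 0) rfl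
  have hPQ' : P ≠ Q' := ne_of_iterate_eq_of_two_cycle hP hQ' hQ hne.symm (n := 0) rfl
  have hAQ' : A ≠ Q' := ne_of_iterate_eq_of_two_cycle hP hQ' hQ hne.symm (n := 1) hA
  have hRQ' (R) (hR : R ∈ E) : R ≠ Q' := by
    obtain ⟨-, n, hn⟩ := hE R hR
    exact ne_of_iterate_eq_of_two_cycle hP hQ' hQ hne.symm (n := n + 1)
      (by rw [Function.iterate_succ_apply', hn, hA])
  have hinj : Set.InjOn (fun R ↦ (crossRatio R Q P Q', crossRatio R A Q' P)) E :=
    fun R hR R' hR' h ↦ eq_of_crossRatio_eq (hRQ' R hR) (hRQ' R' hR') hPQ hPQ' hne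
      (congrArg Prod.fst h)
  have hcard := card_unitSolution_le (T := T) (crossRatio_ne_zero hne hAP hPQ.symm hAQ')
    (E := E.image fun R ↦ (crossRatio R Q P Q', crossRatio R A Q' P)) (Finset.forall_mem_image.mpr
      fun R hR ↦ (hE R hR).2.elim fun _ hn ↦
        unitSolution_crossRatio hφ hP hQ hQ' hne hA hAP (hE R hR).1 hn)
  rwa [Finset.card_image_of_injOn hinj, Fintype.card_sum, Fintype.card_coe, add_comm] at hcard

lemma card_le_of_subset_tailOf (hd : d ≠ 0) (hφ : GoodReductionOutside φ T) (hP : φ.toFun P = P)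
    (hQ : φ.toFun Q = Q') (hQ' : φ.toFun Q' = Q) (hne : Q ≠ Q') {E : Finset (P1 K)}
    (hE : ↑E ⊆ TailOf φ P) : (E.card : ℝ) ≤ (Real.exp (41 * sCard K T) + 1) * (d - 1) := by
  have hentry (R) (hR : R ∈ E) : ∃ n, φ.toFun^[n] R ≠ P ∧ φ.toFun (φ.toFun^[n] R) = P := by
    obtain ⟨hnonperiodic, n, hn⟩ := hE hR
    exact exists_iterate_ne_and_apply_eq (fun h ↦ hnonperiodic ⟨1, one_pos, h ▸ hP⟩) hn
  choose! n hn using hentry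
  let entry (R : P1 K) : P1 K := φ.toFun^[n R] R
  have hentries : ((E.image entry).card : ℝ) ≤ d - 1 := by
    have := φ.card_add_one_le_of_toFun_eq hd hP (E := E.image entry) (by simpa using hn)
    rw [le_sub_iff_add_le]
    exact_mod_cast this
  have hfiber (A) (hA : A ∈ E.image entry) :
      ((E.filter (entry · = A)).card : ℝ) ≤ Real.exp (41 * sCard K T) + 1 := by
    obtain ⟨hAP, hAP'⟩ : A ≠ P ∧ φ.toFun A = P := by
      obtain ⟨R, hR, rfl⟩ := Finset.mem_image.mp hA
      exact hn R hR
    have hne_entry : (((E.filter (entry · = A)).erase A).card : ℝ) ≤ Real.exp (41 * sCard K T) :=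
      card_le_exp_of_iterate_eq hφ hP hQ hQ' hne hAP' hAP fun R hR ↦
        ⟨Finset.ne_of_mem_erase hR, n R, (Finset.mem_filter.mp (Finset.mem_of_mem_erase hR)).2⟩
    have herase : ((E.filter (entry · = A)).card : ℝ) ≤
        ((E.filter (entry · = A)).erase A).card + 1 := by
      exact_mod_cast Nat.sub_le_iff_le_add.mp Finset.pred_card_le_card_erase
    linarith
  calc (E.card : ℝ) = ∑ A ∈ E.image entry, ((E.filter (entry · = A)).card : ℝ) := by
        exact_mod_cast Finset.card_eq_sum_card_image entry E
    _ ≤ (E.image entry).card • (Real.exp (41 * sCard K T) + 1) :=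
        Finset.sum_le_card_nsmul _ _ _ hfiber
    _ ≤ (Real.exp (41 * sCard K T) + 1) * (d - 1) := by
        rw [nsmul_eq_mul, mul_comm]
        gcongr

end TailCount

lemma finite_and_ncard_le {α : Type*} {X : Set α} {B : ℝ}
    (h : ∀ E : Finset α, ↑E ⊆ X → (E.card : ℝ) ≤ B) : X.Finite ∧ (X.ncard : ℝ) ≤ B := by
  have hfinite : X.Finite := by
    by_contra hinfinite
    obtain ⟨E, hE, hcard⟩ := Set.Infinite.exists_subset_card_eq hinfinite (⌊B⌋₊ + 1)
    have hB := h E hE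
    rw [hcard] at hB
    exact absurd hB (by exact_mod_cast (Nat.lt_floor_add_one B).not_ge)
  refine ⟨hfinite, ?_⟩
  rw [Set.ncard_eq_toFinset_card X hfinite]
  exact h _ hfinite.coe_toFinset.subset

lemma exp_mul_le_Cconst_three {s : ℕ} (hs : s ≠ 0) : Real.exp (41 * s) ≤ Cconst 3 s := by
  have hs' : (1 : ℝ) ≤ s := by exact_mod_cast Nat.one_le_iff_ne_zero.mpr hs
  refine Real.exp_le_exp.mpr ?_
  norm_num
  linarith

lemma sCard_ne_zero (K : Type*) [Field K] [NumberField K] (T : Finset (HeightOneSpectrum (𝓞 K))) :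
    sCard K T ≠ 0 :=
  (Nat.add_pos_right _ Fintype.card_pos).ne'

/-- **Lemma (tail of a fixed point in the presence of a two-cycle).** If `P ∈ ℙ¹(K)` is a
fixed point of `φ` and `Q ∈ ℙ¹(K)` is a periodic point of `φ` of period `2`, then
`|Tail(φ,K,P)| ≤ L₄(d,|S|) = (C(3,|S|) + 3)(d-1)`. -/
theorem tailOf_fixed_point_bound_of_two_cycle
    {K : Type*} [Field K] [NumberField K]
    (T : Finset (HeightOneSpectrum (𝓞 K))) {d : ℕ} (hd : 2 ≤ d)
    (φ : P1Map K d) (hgr : GoodReductionOutside φ T)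
    (P : P1 K) (hfix : φ.toFun P = P)
    (Q : P1 K) (hQ : Function.minimalPeriod φ.toFun Q = 2) :
    (TailOf φ P).Finite ∧ ((TailOf φ P).ncard : ℝ) ≤ L4const d (sCard K T) := by
  have hcycle : φ.toFun (φ.toFun Q) = Q := by
    simpa [hQ] using Function.iterate_minimalPeriod (f := φ.toFun) (x := Q)
  have hne : Q ≠ φ.toFun Q := by
    intro h
    have hone := Function.minimalPeriod_eq_one_iff_isFixedPt.mpr h.symm
    omega
  refine finite_and_ncard_le fun E hE ↦ ?_
  have hd' : (0 : ℝ) ≤ d - 1 := by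
    rw [sub_nonneg]
    exact_mod_cast one_le_two.trans hd
  calc (E.card : ℝ) ≤ (Real.exp (41 * sCard K T) + 1) * (d - 1) :=
        card_le_of_subset_tailOf (by omega) hgr hfix rfl hcycle hne hE
    _ ≤ (Cconst 3 (sCard K T) + 3) * (d - 1) := by
        gcongr
        · exact exp_mul_le_Cconst_three (sCard_ne_zero K T)
        · norm_num
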